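/- arXiv:2409.14253 — 3 statements merged into one kernel-verified Lean document; each statement's English description precedes it below -/
import Mathlib

section
/- There exists an infinite family (f_i)_{i ∈ ℕ} of functions from the positive integers to ℚ that is linearly independent over ℂ (as elements of the space of functions from the positive integers to ℂ) such that: each f_i has the form f_i(n) = Σ_{|𝐚| ≤ d_i} c_{𝐚} · M_{𝐚}(n), a finite linear combination with integer coefficients c_{𝐚} over vectors 𝐚 of positive integers with |𝐚| ≤ d_i for some d_i ≥ 21; and for every i and every integer n ≥ 2, f_i(n) = 0 if and only if n = p³ for some prime p. -/
/-- The weight `|𝐚|` of a vector of positive integers: the sum of its entries. -/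
def weight (v : List ℕ+) : ℕ := (v.map fun x => (x : ℕ)).sum

/-- The MacMahonesque partition function `M_{𝐚}(n)`: the sum of
`m₁^{v₁} ⋯ m_a^{v_a}` over all `0 < s₁ < ⋯ < s_a` and positive integers `m₁, …, m_a`
with `n = m₁s₁ + ⋯ + m_a s_a`.  (Any such `sᵢ, mᵢ` lie in `[1, n]`, so the sum below
ranges over all solutions.) -/
def macM (v : List ℕ+) (n : ℕ) : ℕ :=
  ∑ sm ∈ Fintype.piFinset fun _ : Fin v.length => Finset.Icc 1 n ×ˢ Finset.Icc 1 n,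
    if (∀ i j : Fin v.length, i < j → (sm i).1 < (sm j).1) ∧
        n = ∑ i : Fin v.length, (sm i).2 * (sm i).1 then
      ∏ i : Fin v.length, (sm i).2 ^ (v.get i : ℕ)
    else 0

/-!
A product of nested sums over `s₁ < ⋯ < s_a` is expanded by the Rota–Baxter identity for partial
summation. As the products of the series `∑ₘ mᵘ Xᵐ` with `u > 0` are again combinations of such
series, the generating series `∑ₙ M_𝐚(n) Xⁿ` span an algebra. It contains
`G_k = ∑ₙ σ_k(n) Xⁿ`, which is the case of the vector `(k)`.

Liouville's identity for the even functions `x ↦ x²ᵐ` writes `X · dG_{2m-1}/dX` as a polynomial in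
the `G_k` with `k` odd. The algebra these generate is thus closed under `X · d/dX`, and hence
contains `∑ₙ (∑_{d ∣ n} d p(n, d²)) Xⁿ` for every polynomial `p`.

The factors `d² - 1`, `d² - n²`, `d⁶ - n²` and `d⁶ - n⁴` have the divisors `1`, `n`, `p` and `p²` of
`n = p³` as zeros, so the sum over `d ∣ n` of `d` times the square of their product vanishes only at
`1`, primes and cubes of primes. Multiplied by a large power of `n`, it outweighs a correction term
which vanishes at the cubes of primes but not at the primes. Multiplying by the powers `nⁱ` gives
the linearly independent family.
-/

/-! ### The algebra spanned by the MacMahonesque functions -/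

section IteratedSums

variable (R : Type*) {A ι : Type*} [CommSemiring R] [CommSemiring A] [Algebra R A]

/-- The operator `Σ` of partial summation on sequences, `(Σf)(B) = f(0) + ⋯ + f(B - 1)`. -/
def partialSum : (ℕ → A) →ₗ[R] (ℕ → A) where
  toFun f B := ∑ t ∈ Finset.range B, f t
  map_add' _ _ := funext fun _ => Finset.sum_add_distrib
  map_smul' c f := funext fun B => (Finset.smul_sum (r := c) (f := f) (s := Finset.range B)).symm

theorem partialSum_apply (f : ℕ → A) (B : ℕ) : partialSum R f B = ∑ t ∈ Finset.range B, f t :=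
  rfl

theorem partialSum_mul_partialSum (f g : ℕ → A) :
    partialSum R f * partialSum R g =
      partialSum R (partialSum R f * g) + partialSum R (f * partialSum R g) +
        partialSum R (f * g) := by
  funext B
  simp only [Pi.mul_apply, Pi.add_apply, partialSum_apply]
  induction B with
  | zero => simp
  | succ B ih =>
    simp only [Finset.sum_range_succ, add_mul, mul_add, ih]
    ring

/-- The strictly increasing `k`-tuples of naturals below `B`. -/
def increasingTuples (k B : ℕ) : Finset (Fin k → ℕ) :=
  {s ∈ Fintype.piFinset fun _ => Finset.range B | ∀ i j, i < j → s i < s j}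

theorem mem_increasingTuples {k B : ℕ} {s : Fin k → ℕ} :
    s ∈ increasingTuples k B ↔ (∀ i, s i < B) ∧ ∀ i j, i < j → s i < s j := by
  simp [increasingTuples]

theorem snoc_mem_increasingTuples {k B t : ℕ} {s : Fin k → ℕ} :
    Fin.snoc s t ∈ increasingTuples (k + 1) B ↔ t < B ∧ s ∈ increasingTuples k t := by
  simp only [mem_increasingTuples, Fin.forall_fin_succ', Fin.snoc_castSucc, Fin.snoc_last,
    Fin.castSucc_lt_castSucc_iff, Fin.castSucc_lt_last, (Fin.castSucc_lt_last _).not_gt,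
    lt_irrefl, forall_and, forall_const, false_imp_iff, implies_true, and_true]
  exact ⟨fun ⟨⟨_, ht⟩, hs, hst⟩ => ⟨ht, hst, hs⟩,
    fun ⟨ht, hst, hs⟩ => ⟨⟨fun i => (hst i).trans ht, ht⟩, hs, hst⟩⟩

/-- The nested sum `∑ e_{v 0}(s₀) ⋯ e_{v (k-1)}(s_{k-1})` over `0 ≤ s₀ < ⋯ < s_{k-1} < B`. -/
def iteratedSum (e : ι → ℕ → A) {k : ℕ} (v : Fin k → ι) (B : ℕ) : A :=
  ∑ s ∈ increasingTuples k B, ∏ i, e (v i) (s i)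

theorem iteratedSum_of_fin_zero (e : ι → ℕ → A) (v : Fin 0 → ι) : iteratedSum e v = 1 := by
  funext B
  simp [iteratedSum, increasingTuples]

theorem iteratedSum_snoc (e : ι → ℕ → A) {k : ℕ} (v : Fin k → ι) (u : ι) :
    iteratedSum e (Fin.snoc v u : Fin (k + 1) → ι) = partialSum R (iteratedSum e v * e u) := by
  funext B
  simp only [partialSum_apply, iteratedSum, Pi.mul_apply, Finset.sum_mul, Finset.sum_sigma']
  refine Finset.sum_bij' (fun s _ => ⟨s (Fin.last k), Fin.init s⟩)
    (fun p _ => Fin.snoc p.2 p.1) (fun s hs => ?_) (fun p hp => ?_) ?_ ?_ ?_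
  · rw [← Fin.snoc_init_self s, snoc_mem_increasingTuples] at hs
    simpa using hs
  · simpa [snoc_mem_increasingTuples] using hp
  · simp
  · simp
  · simp [Fin.prod_univ_castSucc, Fin.init]

theorem partialSum_mul_mem_span_iteratedSum {e : ι → ℕ → A} {f g : ℕ → A}
    (hf : f ∈ Submodule.span R (Set.range fun v : (k : ℕ) × (Fin k → ι) => iteratedSum e v.2))
    (hg : g ∈ Submodule.span R (Set.range e)) :
    partialSum R (f * g) ∈
      Submodule.span R (Set.range fun v : (k : ℕ) × (Fin k → ι) => iteratedSum e v.2) := by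
  refine LinearMap.BilinMap.apply_apply_mem_of_mem_span _ _ _
    ((LinearMap.mul R (ℕ → A)).compr₂ (partialSum R)) ?_ f g hf hg
  rintro _ ⟨⟨k, v⟩, rfl⟩ _ ⟨u, rfl⟩
  exact Submodule.subset_span ⟨⟨k + 1, Fin.snoc v u⟩, iteratedSum_snoc R e v u⟩

theorem iteratedSum_mul_iteratedSum_mem_span {e : ι → ℕ → A}
    (he : ∀ u u', e u * e u' ∈ Submodule.span R (Set.range e)) {k l : ℕ}
    (v : Fin k → ι) (w : Fin l → ι) :
    iteratedSum e v * iteratedSum e w ∈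
      Submodule.span R (Set.range fun v : (k : ℕ) × (Fin k → ι) => iteratedSum e v.2) := by
  induction v using Fin.snocInduction generalizing l w with
  | elim0 =>
    rw [iteratedSum_of_fin_zero, one_mul]
    exact Submodule.subset_span ⟨⟨l, w⟩, rfl⟩
  | snoc v u ihv =>
    induction w using Fin.snocInduction with
    | elim0 =>
      rw [iteratedSum_of_fin_zero, mul_one]
      exact Submodule.subset_span ⟨⟨_, Fin.snoc v u⟩, rfl⟩
    | snoc w u' ihw =>
      have rotaBaxter : iteratedSum e (Fin.snoc v u) * iteratedSum e (Fin.snoc w u') =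
          partialSum R (iteratedSum e (Fin.snoc v u) * iteratedSum e w * e u') +
          partialSum R (iteratedSum e v * iteratedSum e (Fin.snoc w u') * e u) +
          partialSum R (iteratedSum e v * iteratedSum e w * (e u * e u')) := by
        simp only [iteratedSum_snoc R, partialSum_mul_partialSum, mul_assoc, mul_left_comm,
          mul_comm (e u)]
      rw [rotaBaxter]
      exact add_mem (add_mem
        (partialSum_mul_mem_span_iteratedSum R ihw (Submodule.subset_span ⟨u', rfl⟩))
        (partialSum_mul_mem_span_iteratedSum R (ihv (Fin.snoc w u'))
          (Submodule.subset_span ⟨u, rfl⟩)))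
        (partialSum_mul_mem_span_iteratedSum R (ihv w) (he u u'))

end IteratedSums

open PowerSeries in
/-- The Euler derivation `X · d/dX`, which multiplies the `n`-th coefficient by `n`. -/
noncomputable def eulerDerivation (R : Type*) [CommSemiring R] :
    Derivation R (PowerSeries R) (PowerSeries R) :=
  (X : PowerSeries R) • derivative R

theorem coeff_eulerDerivation {R : Type*} [CommSemiring R] (f : PowerSeries R) (n : ℕ) :
    PowerSeries.coeff n (eulerDerivation R f) = n * PowerSeries.coeff n f := by
  cases n with
  | zero => simp [eulerDerivation]
  | succ n =>
    simp [eulerDerivation, PowerSeries.coeff_succ_X_mul, PowerSeries.coeff_derivative, mul_comm]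

/-- The power series `∑ₘ mᵘ Xᵐ`. -/
noncomputable def powSeries (u : ℕ) : PowerSeries ℚ :=
  PowerSeries.mk fun m => (m : ℚ) ^ u

theorem eulerDerivation_powSeries (u : ℕ) :
    eulerDerivation ℚ (powSeries u) = powSeries (u + 1) := by
  ext n
  simp [coeff_eulerDerivation, powSeries, pow_succ']

theorem powSeries_mem_span {u : ℕ} (hu : u ≠ 0) :
    powSeries u ∈ Submodule.span ℚ (Set.range fun w : ℕ+ => powSeries w) :=
  Submodule.subset_span ⟨⟨u, Nat.pos_of_ne_zero hu⟩, rfl⟩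

theorem eulerDerivation_mem_span_powSeries {f : PowerSeries ℚ}
    (hf : f ∈ Submodule.span ℚ (Set.range fun w : ℕ+ => powSeries w)) :
    eulerDerivation ℚ f ∈ Submodule.span ℚ (Set.range fun w : ℕ+ => powSeries w) := by
  suffices h : Submodule.span ℚ (Set.range fun w : ℕ+ => powSeries w) ≤
      Submodule.comap (eulerDerivation ℚ).toLinearMap
        (Submodule.span ℚ (Set.range fun w : ℕ+ => powSeries w)) from h hf
  rw [Submodule.span_le]
  rintro _ ⟨w, rfl⟩
  simpa [eulerDerivation_powSeries] using powSeries_mem_span w.val.succ_ne_zero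

theorem powSeries_mul_powSeries_zero {u : ℕ} (hu : u ≠ 0) :
    powSeries u * powSeries 0 = ∑ i ∈ Finset.range (u + 1),
      (bernoulli' i * (u + 1).choose i / (u + 1)) • powSeries (u + 1 - i) := by
  ext n
  calc PowerSeries.coeff n (powSeries u * powSeries 0)
    _ = ∑ k ∈ Finset.Ico 1 (n + 1), (k : ℚ) ^ u := by
      simp [PowerSeries.coeff_mul, powSeries, Finset.Nat.sum_antidiagonal_eq_sum_range_succ_mk,
        Finset.sum_range_eq_add_Ico _ n.succ_pos, hu]
    _ = _ := by
      rw [sum_Ico_pow, map_sum]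
      exact Finset.sum_congr rfl fun i _ => by simp [powSeries]; ring

theorem powSeries_mul_powSeries_mem_span {u : ℕ} (hu : u ≠ 0) (v : ℕ) :
    powSeries u * powSeries v ∈ Submodule.span ℚ (Set.range fun w : ℕ+ => powSeries w) := by
  induction v generalizing u with
  | zero =>
    rw [powSeries_mul_powSeries_zero hu]
    refine Submodule.sum_mem _ fun i hi => Submodule.smul_mem _ _ (powSeries_mem_span ?_)
    have := Finset.mem_range.1 hi
    omega
  | succ v ih =>
    have leibniz : powSeries u * powSeries (v + 1) =
        eulerDerivation ℚ (powSeries u * powSeries v) - powSeries (u + 1) * powSeries v := by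
      simp only [Derivation.leibniz, eulerDerivation_powSeries, smul_eq_mul]
      ring
    rw [leibniz]
    exact sub_mem (eulerDerivation_mem_span_powSeries (ih hu)) (ih u.succ_ne_zero)

/-- The homomorphism sending `f(X)` to the sequence `f(X), f(X²), f(X³), …`, indexed from `0`. -/
noncomputable def dilations : PowerSeries ℚ →ₐ[ℚ] (ℕ → PowerSeries ℚ) :=
  AlgHom.pi fun t => PowerSeries.expand (t + 1) t.succ_ne_zero

theorem coeff_dilations_powSeries (u : ℕ+) (t n : ℕ) :
    PowerSeries.coeff n (dilations (powSeries u) t) =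
      if t + 1 ∣ n then ((n / (t + 1) : ℕ) : ℚ) ^ (u : ℕ) else 0 := by
  simp [dilations, powSeries, PowerSeries.coeff_expand]

theorem dilations_powSeries_mul_mem_span (u u' : ℕ+) :
    dilations (powSeries u) * dilations (powSeries u') ∈
      Submodule.span ℚ (Set.range fun w : ℕ+ => dilations (powSeries w)) := by
  have := Submodule.mem_map_of_mem (f := dilations.toLinearMap)
    (powSeries_mul_powSeries_mem_span u.ne_zero u')
  rwa [Submodule.map_span, ← Set.range_comp, AlgHom.toLinearMap_apply, map_mul] at this

theorem coeff_prod_dilations_powSeries {k : ℕ} (v : Fin k → ℕ+) (t : Fin k → ℕ) (n : ℕ) :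
    PowerSeries.coeff n (∏ i, dilations (powSeries (v i)) (t i)) =
      ∑ m ∈ Fintype.piFinset (fun _ : Fin k => Finset.Icc 1 n) with n = ∑ i, m i * (t i + 1),
        ∏ i, (m i : ℚ) ^ (v i : ℕ) := by
  simp only [PowerSeries.coeff_prod, coeff_dilations_powSeries]
  symm
  refine Finset.sum_of_injOn
    (fun m => Finsupp.equivFunOnFinite.symm fun i => m i * (t i + 1)) ?_ ?_ ?_ ?_
  · intro m _ m' _ h
    funext i
    simpa using congrArg (fun l => l i) h
  · intro m hm
    simp_all
  · intro l hl hlm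
    rw [Finset.mem_finsuppAntidiag] at hl
    have sum_l : ∑ i, l i = n := hl.1
    contrapose! hlm
    have factor_ne_zero (i : Fin k) := Finset.prod_ne_zero_iff.1 hlm i (Finset.mem_univ i)
    have dvd (i : Fin k) : t i + 1 ∣ l i := by
      by_contra h
      exact factor_ne_zero i (if_neg h)
    have div_pos (i : Fin k) : 1 ≤ l i / (t i + 1) := by
      have := factor_ne_zero i
      rw [if_pos (dvd i)] at this
      exact Nat.one_le_iff_ne_zero.2 fun h => this (by simp [h])
    have div_le (i : Fin k) : l i / (t i + 1) ≤ n := (Nat.div_le_self _ _).trans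
      (sum_l ▸ Finset.single_le_sum (f := l) (fun _ _ => Nat.zero_le _) (Finset.mem_univ i))
    refine ⟨fun i => l i / (t i + 1), ?_, ?_⟩
    · simp [Nat.div_mul_cancel, dvd, sum_l, div_pos, div_le]
    · ext i
      simp [Nat.div_mul_cancel, dvd]
  · intro m _
    simp

/-- The solutions `(sᵢ, mᵢ)` of `n = m₁s₁ + ⋯ + m_k s_k` that index the sum defining `macM`. -/
def macSolutions (k n : ℕ) : Finset (Fin k → ℕ × ℕ) :=
  {sm ∈ Fintype.piFinset fun _ => Finset.Icc 1 n ×ˢ Finset.Icc 1 n |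
    (∀ i j, i < j → (sm i).1 < (sm j).1) ∧ n = ∑ i, (sm i).2 * (sm i).1}

theorem macM_eq_sum_macSolutions (v : List ℕ+) (n : ℕ) :
    macM v n = ∑ sm ∈ macSolutions v.length n, ∏ i, (sm i).2 ^ (v.get i : ℕ) :=
  (Finset.sum_filter _ _).symm

theorem mem_macSolutions {k n : ℕ} {sm : Fin k → ℕ × ℕ} :
    sm ∈ macSolutions k n ↔ (∀ i, 1 ≤ (sm i).1 ∧ (sm i).1 ≤ n ∧ (sm i).2 ∈ Finset.Icc 1 n) ∧
      (∀ i j, i < j → (sm i).1 < (sm j).1) ∧ n = ∑ i, (sm i).2 * (sm i).1 := by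
  simp [macSolutions, and_assoc]

theorem cast_macM_eq_coeff_iteratedSum (v : List ℕ+) {n B : ℕ} (hn : n ≤ B) :
    (macM v n : ℚ) =
      PowerSeries.coeff n (iteratedSum (fun u : ℕ+ => dilations (powSeries u)) v.get B) := by
  simp only [iteratedSum, map_sum, coeff_prod_dilations_powSeries, Finset.sum_sigma',
    macM_eq_sum_macSolutions, Nat.cast_sum, Nat.cast_prod, Nat.cast_pow]
  refine Finset.sum_of_injOn (fun sm => ⟨fun i => (sm i).1 - 1, fun i => (sm i).2⟩) ?_ ?_ ?_ ?_
  · intro x hx y hy hxy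
    simp only [Sigma.mk.injEq, heq_eq_eq, funext_iff] at hxy
    refine funext fun i => Prod.ext ?_ (hxy.2 i)
    have := hxy.1 i
    have := (mem_macSolutions.1 hx).1 i
    have := (mem_macSolutions.1 hy).1 i
    omega
  · intro sm h
    obtain ⟨bounds, mono, sum_eq⟩ := mem_macSolutions.1 h
    have sub_add (i) : (sm i).1 - 1 + 1 = (sm i).1 := Nat.sub_add_cancel (bounds i).1
    simp only [Finset.coe_sigma, Set.mem_sigma_iff, Finset.mem_coe, mem_increasingTuples,
      Finset.mem_filter, Fintype.mem_piFinset, sub_add]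
    refine ⟨⟨fun i => ?_, fun i j hij => ?_⟩, fun i => (bounds i).2.2, sum_eq⟩
    · have := bounds i
      omega
    · have := bounds i
      have := mono i j hij
      omega
  · rintro ⟨s, m⟩ h h'
    simp only [Finset.mem_sigma, mem_increasingTuples, Finset.mem_filter,
      Fintype.mem_piFinset] at h
    obtain ⟨⟨-, mono⟩, bounds, sum_eq⟩ := h
    refine absurd ⟨fun i => (s i + 1, m i), mem_macSolutions.2 ⟨fun i => ?_, ?_, sum_eq⟩, rfl⟩ h'
    · refine ⟨Nat.le_add_left 1 _, ?_, bounds i⟩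
      calc s i + 1 ≤ m i * (s i + 1) := Nat.le_mul_of_pos_left _ (Finset.mem_Icc.1 (bounds i)).1
        _ ≤ ∑ j, m j * (s j + 1) := Finset.single_le_sum
          (f := fun j => m j * (s j + 1)) (fun _ _ => Nat.zero_le _) (Finset.mem_univ i)
        _ = n := sum_eq.symm
    · simpa using mono
  · simp

/-- The generating series `∑ₙ M_𝐚(n) Xⁿ`. -/
noncomputable def macSeries (v : List ℕ+) : PowerSeries ℚ :=
  PowerSeries.mk fun n => (macM v n : ℚ)

/-- The power series with the same `n`-th coefficient as the `n`-th term of a sequence. -/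
noncomputable def diagonal : (ℕ → PowerSeries ℚ) →ₗ[ℚ] PowerSeries ℚ where
  toFun T := PowerSeries.mk fun n => PowerSeries.coeff n (T n)
  map_add' _ _ := by ext; simp
  map_smul' _ _ := by ext; simp

theorem diagonal_iteratedSum (v : List ℕ+) :
    diagonal (iteratedSum (fun u : ℕ+ => dilations (powSeries u)) v.get) = macSeries v := by
  ext n
  simp [diagonal, macSeries, cast_macM_eq_coeff_iteratedSum v le_rfl]

-- The truncation at `B = n` already determines all coefficients up to the `n`-th.
theorem diagonal_iteratedSum_mul_iteratedSum (v w : List ℕ+) :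
    diagonal (iteratedSum (fun u : ℕ+ => dilations (powSeries u)) v.get *
      iteratedSum (fun u : ℕ+ => dilations (powSeries u)) w.get) = macSeries v * macSeries w := by
  ext n
  simp only [diagonal, LinearMap.coe_mk, AddHom.coe_mk, PowerSeries.coeff_mk, Pi.mul_apply,
    PowerSeries.coeff_mul, macSeries]
  refine Finset.sum_congr rfl fun ij hij => ?_
  rw [cast_macM_eq_coeff_iteratedSum v (Finset.HasAntidiagonal.antidiagonal.fst_le hij),
    cast_macM_eq_coeff_iteratedSum w (Finset.HasAntidiagonal.antidiagonal.snd_le hij)]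

theorem macSeries_mul_macSeries_mem_span (v w : List ℕ+) :
    macSeries v * macSeries w ∈ Submodule.span ℚ (Set.range macSeries) := by
  rw [← diagonal_iteratedSum_mul_iteratedSum]
  have := Submodule.mem_map_of_mem (f := diagonal)
    (iteratedSum_mul_iteratedSum_mem_span ℚ dilations_powSeries_mul_mem_span v.get w.get)
  rw [Submodule.map_span, ← Set.range_comp, ← List.equivSigmaTuple.surjective.range_comp] at this
  have range_eq : Set.range macSeries = Set.range ((diagonal ∘ fun v : (k : ℕ) × (Fin k → ℕ+) =>
      iteratedSum (fun u : ℕ+ => dilations (powSeries u)) v.2) ∘ List.equivSigmaTuple) :=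
    congrArg Set.range (funext fun l => (diagonal_iteratedSum l).symm)
  rwa [range_eq]

theorem macSeries_nil : macSeries [] = 1 := by
  rw [← diagonal_iteratedSum]
  ext n
  simp [iteratedSum_of_fin_zero, diagonal]

/-- The `ℚ`-span of the generating series of the MacMahonesque functions, as an algebra. -/
noncomputable def macSubalgebra : Subalgebra ℚ (PowerSeries ℚ) :=
  (Submodule.span ℚ (Set.range macSeries)).toSubalgebra
    (Submodule.subset_span ⟨[], macSeries_nil⟩) fun f g hf hg =>
      LinearMap.BilinMap.apply_apply_mem_of_mem_span _ _ _ (LinearMap.mul ℚ (PowerSeries ℚ))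
        (by rintro _ ⟨v, rfl⟩ _ ⟨w, rfl⟩; exact macSeries_mul_macSeries_mem_span v w) f g hf hg

theorem mem_macSubalgebra {f : PowerSeries ℚ} :
    f ∈ macSubalgebra ↔ f ∈ Submodule.span ℚ (Set.range macSeries) :=
  Iff.rfl

/-- The divisor-sum transform `f ↦ ∑ₙ (∑_{d ∣ n} f(d)) Xⁿ`. -/
noncomputable def divisorSeries : (ℕ → ℚ) →ₗ[ℚ] PowerSeries ℚ where
  toFun f := PowerSeries.mk fun n => ∑ d ∈ n.divisors, f d
  map_add' _ _ := by ext; simp [Finset.sum_add_distrib]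
  map_smul' _ _ := by ext; simp [Finset.mul_sum]

theorem coeff_divisorSeries (f : ℕ → ℚ) (n : ℕ) :
    PowerSeries.coeff n (divisorSeries f) = ∑ d ∈ n.divisors, f d := by
  simp [divisorSeries]

/-- The generating series `G_k = ∑ₙ σ_k(n) Xⁿ`. -/
noncomputable def sigmaSeries (k : ℕ) : PowerSeries ℚ :=
  divisorSeries fun d => (d : ℚ) ^ k

theorem macSeries_singleton (k : ℕ+) : macSeries [k] = sigmaSeries k := by
  ext n
  rw [← diagonal_iteratedSum, show [k].get = Fin.snoc Fin.elim0 k from by ext i; fin_cases i; rfl,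
    iteratedSum_snoc ℚ]
  calc _ = ∑ t ∈ Finset.range n, if t + 1 ∣ n then ((n / (t + 1) : ℕ) : ℚ) ^ (k : ℕ) else 0 := by
        simp [diagonal, partialSum_apply, iteratedSum_of_fin_zero, coeff_dilations_powSeries]
    _ = ∑ d ∈ n.divisors, ((n / d : ℕ) : ℚ) ^ (k : ℕ) := by
        simp [Nat.divisors, Finset.sum_filter, Finset.sum_Ico_eq_sum_range, add_comm]
    _ = _ := by
        rw [Nat.sum_div_divisors n fun d => (d : ℚ) ^ (k : ℕ), sigmaSeries, coeff_divisorSeries]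

theorem sigmaSeries_mem_macSubalgebra {k : ℕ} (hk : k ≠ 0) : sigmaSeries k ∈ macSubalgebra :=
  mem_macSubalgebra.2 (Submodule.subset_span
    ⟨[⟨k, Nat.pos_of_ne_zero hk⟩], macSeries_singleton _⟩)

/-! ### Liouville's identity and quasimodular forms -/

section Liouville

/-- The solutions in positive integers of `a x + b y = n`, encoded as `((a, x), (b, y))`. -/
def liouvilleSolutions (n : ℕ) : Finset ((ℕ × ℕ) × (ℕ × ℕ)) :=
  {q ∈ (Finset.Icc 1 n ×ˢ Finset.Icc 1 n) ×ˢ (Finset.Icc 1 n ×ˢ Finset.Icc 1 n) |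
    q.1.1 * q.1.2 + q.2.1 * q.2.2 = n}

theorem mem_liouvilleSolutions {n : ℕ} {q : (ℕ × ℕ) × (ℕ × ℕ)} :
    q ∈ liouvilleSolutions n ↔ (0 < q.1.1 ∧ 0 < q.1.2) ∧ (0 < q.2.1 ∧ 0 < q.2.2) ∧
      q.1.1 * q.1.2 + q.2.1 * q.2.2 = n := by
  obtain ⟨⟨a, x⟩, b, y⟩ := q
  simp only [liouvilleSolutions, Finset.mem_filter, Finset.mem_product, Finset.mem_Icc]
  constructor
  · omega
  · rintro ⟨⟨ha, hx⟩, ⟨hb, hy⟩, rfl⟩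
    have := Nat.le_mul_of_pos_right a hx
    have := Nat.le_mul_of_pos_left x ha
    have := Nat.le_mul_of_pos_right b hy
    have := Nat.le_mul_of_pos_left y hb
    omega

variable {R : Type*} [CommRing R] {n : ℕ}

theorem sum_liouvilleSolutions_swap (P : (ℕ × ℕ) × (ℕ × ℕ) → Prop) [DecidablePred P]
    (f : (ℕ × ℕ) × (ℕ × ℕ) → R) :
    ∑ q ∈ liouvilleSolutions n with P q.swap, f q.swap =
      ∑ q ∈ liouvilleSolutions n with P q, f q := by
  refine Finset.sum_equiv (Equiv.prodComm _ _) (fun q => ?_) fun _ _ => rfl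
  simp only [Finset.mem_filter, mem_liouvilleSolutions]
  grind

theorem sum_liouvilleSolutions_transpose (P : (ℕ × ℕ) × (ℕ × ℕ) → Prop) [DecidablePred P]
    (f : (ℕ × ℕ) × (ℕ × ℕ) → R) :
    ∑ q ∈ liouvilleSolutions n with P (q.1.swap, q.2.swap), f (q.1.swap, q.2.swap) =
      ∑ q ∈ liouvilleSolutions n with P q, f q := by
  refine Finset.sum_equiv ((Equiv.prodComm _ _).prodCongr (Equiv.prodComm _ _)) (fun q => ?_)
    fun _ _ => rfl
  simp only [Finset.mem_filter, mem_liouvilleSolutions, Equiv.prodCongr_apply, Equiv.coe_prodComm,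
    Prod.map_fst, Prod.fst_swap, Prod.snd_swap, Prod.map_snd]
  grind

/-- The substitution behind Liouville's identity: `a x + b y = (a + b) x + b (y - x)`. -/
theorem sum_liouvilleSolutions_shear (f : (ℕ × ℕ) × (ℕ × ℕ) → R) :
    ∑ q ∈ liouvilleSolutions n with q.1.2 < q.2.2,
        f ((q.1.1 + q.2.1, q.1.2), (q.2.1, q.2.2 - q.1.2)) =
      ∑ q ∈ liouvilleSolutions n with q.2.1 < q.1.1, f q := by
  refine Finset.sum_nbij' (fun q => ((q.1.1 + q.2.1, q.1.2), (q.2.1, q.2.2 - q.1.2)))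
    (fun q => ((q.1.1 - q.2.1, q.1.2), (q.2.1, q.2.2 + q.1.2))) ?_ ?_ ?_ ?_ fun _ _ => rfl
  · rintro ⟨⟨a, x⟩, b, y⟩ h
    simp only [Finset.mem_filter, mem_liouvilleSolutions] at h ⊢
    obtain ⟨⟨⟨ha, hx⟩, ⟨hb, -⟩, rfl⟩, hxy⟩ := h
    obtain ⟨z, rfl⟩ := Nat.exists_eq_add_of_le hxy.le
    rw [Nat.add_sub_cancel_left]
    exact ⟨⟨⟨by omega, hx⟩, ⟨hb, by omega⟩, by ring⟩, by omega⟩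
  · rintro ⟨⟨a, x⟩, b, y⟩ h
    simp only [Finset.mem_filter, mem_liouvilleSolutions] at h ⊢
    obtain ⟨⟨⟨-, hx⟩, ⟨hb, hy⟩, rfl⟩, hba⟩ := h
    obtain ⟨c, rfl⟩ := Nat.exists_eq_add_of_le hba.le
    rw [Nat.add_sub_cancel_left]
    exact ⟨⟨⟨by omega, hx⟩, ⟨hb, by omega⟩, by ring⟩, by omega⟩
  · rintro ⟨⟨a, x⟩, b, y⟩ h
    simp only [Finset.mem_filter] at h
    simp [h.2.le]
  · rintro ⟨⟨a, x⟩, b, y⟩ h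
    simp only [Finset.mem_filter] at h
    simp [h.2.le]

theorem sum_liouvilleSolutions_snd_eq_snd (f : (ℕ × ℕ) × (ℕ × ℕ) → R) :
    ∑ q ∈ liouvilleSolutions n with q.1.2 = q.2.2, f q =
      ∑ d ∈ n.divisors, ∑ c ∈ Finset.Ico 1 d, f ((c, n / d), (d - c, n / d)) := by
  rw [Finset.sum_sigma']
  have div_eq {a x b : ℕ} (ha : 0 < a) (hn : a * x + b * x = n) : n / (a + b) = x := by
    rw [← hn, ← add_mul, Nat.mul_div_cancel_left x (by omega)]
  refine Finset.sum_bij' (fun q _ => ⟨q.1.1 + q.2.1, q.1.1⟩)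
    (fun p _ => ((p.2, n / p.1), (p.1 - p.2, n / p.1))) ?_ ?_ ?_ ?_ ?_
  · rintro ⟨⟨a, x⟩, b, y⟩ h
    simp only [Finset.mem_filter, mem_liouvilleSolutions] at h
    obtain ⟨⟨⟨ha, hx⟩, ⟨hb, -⟩, rfl⟩, rfl⟩ := h
    simp only [Finset.mem_sigma, Nat.mem_divisors, Finset.mem_Ico, ← add_mul]
    exact ⟨⟨dvd_mul_right _ _, by positivity⟩, ha, by omega⟩
  · rintro ⟨d, c⟩ h
    simp only [Finset.mem_sigma, Nat.mem_divisors, Finset.mem_Ico] at h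
    obtain ⟨⟨hd, hn⟩, hc, hcd⟩ := h
    have : 0 < n / d := Nat.div_pos (Nat.le_of_dvd (Nat.pos_of_ne_zero hn) hd) (by omega)
    simp only [Finset.mem_filter, mem_liouvilleSolutions, and_true]
    refine ⟨⟨hc, this⟩, ⟨by omega, this⟩, ?_⟩
    rw [← add_mul, Nat.add_sub_cancel' hcd.le, Nat.mul_div_cancel' hd]
  · rintro ⟨⟨a, x⟩, b, y⟩ h
    simp only [Finset.mem_filter, mem_liouvilleSolutions] at h
    obtain ⟨⟨⟨ha, -⟩, -, hn⟩, rfl⟩ := h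
    simp [div_eq ha hn]
  · rintro ⟨d, c⟩ h
    simp only [Finset.mem_sigma, Finset.mem_Ico] at h
    simp [Nat.add_sub_cancel' h.2.2.le]
  · rintro ⟨⟨a, x⟩, b, y⟩ h
    simp only [Finset.mem_filter, mem_liouvilleSolutions] at h
    obtain ⟨⟨⟨ha, -⟩, -, hn⟩, rfl⟩ := h
    simp [div_eq ha hn]

theorem sum_liouvilleSolutions_fst_eq_fst (f : (ℕ × ℕ) × (ℕ × ℕ) → R) :
    ∑ q ∈ liouvilleSolutions n with q.1.1 = q.2.1, f q =
      ∑ d ∈ n.divisors, ∑ c ∈ Finset.Ico 1 d, f ((n / d, c), (n / d, d - c)) :=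
  (sum_liouvilleSolutions_transpose (fun q => q.1.1 = q.2.1) f).symm.trans
    (sum_liouvilleSolutions_snd_eq_snd _)

theorem sum_eq_sum_lt_add_sum_eq_add_sum_gt {ι α M : Type*} [LinearOrder α] [AddCommMonoid M]
    (s : Finset ι) (u v : ι → α) (f : ι → M) :
    ∑ i ∈ s, f i = ∑ i ∈ s with u i < v i, f i + ∑ i ∈ s with u i = v i, f i +
      ∑ i ∈ s with v i < u i, f i := by
  simp only [Finset.sum_filter, ← Finset.sum_add_distrib]
  refine Finset.sum_congr rfl fun i _ => ?_
  rcases lt_trichotomy (u i) (v i) with h | h | h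
  · simp [h, h.ne, h.not_gt]
  · simp [h]
  · simp [h, h.ne', h.not_gt]

theorem sum_liouvilleSolutions_sub (F : ℤ → R) (hF : ∀ x, F (-x) = F x) :
    ∑ q ∈ liouvilleSolutions n, F (q.1.1 - q.2.1) =
      2 * ∑ q ∈ liouvilleSolutions n with q.1.2 < q.2.2, F q.1.1 +
        ∑ d ∈ n.divisors, (d - 1 : ℕ) * F 0 := by
  have gt : ∑ q ∈ liouvilleSolutions n with q.2.1 < q.1.1, F (q.1.1 - q.2.1) =
      ∑ q ∈ liouvilleSolutions n with q.1.2 < q.2.2, F q.1.1 := by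
    rw [← sum_liouvilleSolutions_shear]
    simp
  have lt : ∑ q ∈ liouvilleSolutions n with q.1.1 < q.2.1, F (q.1.1 - q.2.1) =
      ∑ q ∈ liouvilleSolutions n with q.2.1 < q.1.1, F (q.1.1 - q.2.1) := by
    rw [← sum_liouvilleSolutions_swap]
    exact Finset.sum_congr rfl fun q _ => by rw [← hF, neg_sub]; rfl
  have eq : ∑ q ∈ liouvilleSolutions n with q.1.1 = q.2.1, F (q.1.1 - q.2.1) =
      ∑ d ∈ n.divisors, (d - 1 : ℕ) * F 0 := by
    simp [sum_liouvilleSolutions_fst_eq_fst]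
  rw [sum_eq_sum_lt_add_sum_eq_add_sum_gt _ (fun q => q.1.1) fun q => q.2.1, lt, gt, eq]
  ring

theorem sum_liouvilleSolutions_add (F : ℤ → R) :
    ∑ q ∈ liouvilleSolutions n, F (q.1.1 + q.2.1) =
      2 * ∑ q ∈ liouvilleSolutions n with q.2.1 < q.1.1, F q.1.1 +
        ∑ d ∈ n.divisors, (d - 1 : ℕ) * F d := by
  have lt : ∑ q ∈ liouvilleSolutions n with q.1.2 < q.2.2, F (q.1.1 + q.2.1) =
      ∑ q ∈ liouvilleSolutions n with q.2.1 < q.1.1, F q.1.1 := by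
    rw [← sum_liouvilleSolutions_shear]
    simp
  have gt : ∑ q ∈ liouvilleSolutions n with q.2.2 < q.1.2, F (q.1.1 + q.2.1) =
      ∑ q ∈ liouvilleSolutions n with q.1.2 < q.2.2, F (q.1.1 + q.2.1) := by
    rw [← sum_liouvilleSolutions_swap]
    simp [add_comm]
  have eq : ∑ q ∈ liouvilleSolutions n with q.1.2 = q.2.2, F (q.1.1 + q.2.1) =
      ∑ d ∈ n.divisors, (d - 1 : ℕ) * F d := by
    rw [sum_liouvilleSolutions_snd_eq_snd]
    refine Finset.sum_congr rfl fun d _ => ?_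
    rw [← nsmul_eq_mul, ← Nat.card_Ico, ← Finset.sum_const]
    refine Finset.sum_congr rfl fun c hc => ?_
    rw [← Nat.cast_add, Nat.add_sub_cancel' (Finset.mem_Ico.1 hc).2.le]
  rw [sum_eq_sum_lt_add_sum_eq_add_sum_gt _ (fun q => q.1.2) fun q => q.2.2, gt, lt, eq]
  ring

theorem sum_liouvilleSolutions_lt_sub_sum_gt (F : ℤ → R) :
    ∑ q ∈ liouvilleSolutions n with q.1.2 < q.2.2, F q.1.1 -
        ∑ q ∈ liouvilleSolutions n with q.2.1 < q.1.1, F q.1.1 =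
      ∑ d ∈ n.divisors, ((n / d - 1 : ℕ) * F d - ∑ c ∈ Finset.Ico 1 d, F c) := by
  have gt_eq_lt : ∑ q ∈ liouvilleSolutions n with q.2.2 < q.1.2, F q.1.1 =
      ∑ q ∈ liouvilleSolutions n with q.1.1 < q.2.1, F q.1.1 := by
    rw [← sum_liouvilleSolutions_swap, ← sum_liouvilleSolutions_swap (fun q => q.1.1 < q.2.1)]
    exact sum_liouvilleSolutions_shear fun q => F q.2.1
  have eq : ∑ q ∈ liouvilleSolutions n with q.1.1 = q.2.1, F q.1.1 =
      ∑ d ∈ n.divisors, (n / d - 1 : ℕ) * F d := by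
    rw [sum_liouvilleSolutions_fst_eq_fst, ← Nat.sum_div_divisors]
    refine Finset.sum_congr rfl fun d hd => ?_
    rw [Nat.div_div_self (Nat.dvd_of_mem_divisors hd) (Nat.ne_zero_of_mem_divisors hd)]
    simp
  have total := sum_eq_sum_lt_add_sum_eq_add_sum_gt (liouvilleSolutions n)
    (fun q => q.1.2) (fun q => q.2.2) fun q => F q.1.1
  rw [sum_eq_sum_lt_add_sum_eq_add_sum_gt _ (fun q => q.1.1) fun q => q.2.1, eq,
    sum_liouvilleSolutions_snd_eq_snd, gt_eq_lt] at total
  rw [Finset.sum_sub_distrib]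
  linear_combination -total

theorem liouville_identity (F : ℤ → R) (hF : ∀ x, F (-x) = F x) :
    ∑ q ∈ liouvilleSolutions n, (F (q.1.1 - q.2.1) - F (q.1.1 + q.2.1)) =
      ∑ d ∈ n.divisors, ((2 * (n / d : ℕ) + 1 - d) * F d -
        2 * ∑ c ∈ Finset.Ico 1 (d + 1), F c + (d - 1) * F 0) := by
  rw [Finset.sum_sub_distrib, sum_liouvilleSolutions_sub F hF, sum_liouvilleSolutions_add]
  calc _ = 2 * (∑ q ∈ liouvilleSolutions n with q.1.2 < q.2.2, F q.1.1 -
          ∑ q ∈ liouvilleSolutions n with q.2.1 < q.1.1, F q.1.1) +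
        ∑ d ∈ n.divisors, (d - 1 : ℕ) * F 0 - ∑ d ∈ n.divisors, (d - 1 : ℕ) * F d := by ring
    _ = _ := ?_
  rw [sum_liouvilleSolutions_lt_sub_sum_gt, Finset.mul_sum, ← Finset.sum_add_distrib,
    ← Finset.sum_sub_distrib]
  refine Finset.sum_congr rfl fun d hd => ?_
  have hd_pos : 1 ≤ d := Nat.pos_of_mem_divisors hd
  have hnd_pos : 1 ≤ n / d := Nat.div_pos (Nat.divisor_le hd) hd_pos
  rw [Finset.sum_Ico_succ_top hd_pos, Nat.cast_sub hd_pos, Nat.cast_sub hnd_pos]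
  push_cast
  ring

end Liouville

theorem coeff_divisorSeries_mul_divisorSeries (f g : ℕ → ℚ) (n : ℕ) :
    PowerSeries.coeff n (divisorSeries f * divisorSeries g) =
      ∑ q ∈ liouvilleSolutions n, f q.1.1 * g q.2.1 := by
  have solutions_eq : liouvilleSolutions n =
      (Finset.HasAntidiagonal.antidiagonal n).biUnion fun ij =>
        ij.1.divisorsAntidiagonal ×ˢ ij.2.divisorsAntidiagonal := by
    ext ⟨⟨a, x⟩, b, y⟩
    simp only [mem_liouvilleSolutions, Finset.mem_biUnion, Finset.mem_product,
      Nat.mem_divisorsAntidiagonal, Finset.HasAntidiagonal.mem_antidiagonal]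
    constructor
    · rintro ⟨⟨ha, hx⟩, ⟨hb, hy⟩, hn⟩
      exact ⟨(a * x, b * y), hn, ⟨rfl, by positivity⟩, rfl, by positivity⟩
    · rintro ⟨ij, hn, ⟨hi, hi0⟩, hj, hj0⟩
      rw [← hi] at hi0
      rw [← hj] at hj0
      refine ⟨⟨?_, ?_⟩, ⟨?_, ?_⟩, by rw [hi, hj, hn]⟩ <;> grind
  rw [solutions_eq, Finset.sum_biUnion, PowerSeries.coeff_mul]
  · refine Finset.sum_congr rfl fun ij _ => ?_
    rw [coeff_divisorSeries, coeff_divisorSeries, ← Nat.sum_divisorsAntidiagonal fun a _ => f a,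
      ← Nat.sum_divisorsAntidiagonal fun b _ => g b, Finset.sum_mul_sum, Finset.sum_product]
  · intro ij _ kl _ hne
    refine Finset.disjoint_left.2 fun q hq hq' => hne ?_
    simp only [Finset.mem_product, Nat.mem_divisorsAntidiagonal] at hq hq'
    exact Prod.ext (hq.1.1.symm.trans hq'.1.1) (hq.2.1.symm.trans hq'.2.1)

theorem sub_pow_two_mul_sub_add_pow_two_mul {R : Type*} [CommRing R] (a b : R) (m : ℕ) :
    (a - b) ^ (2 * m) - (a + b) ^ (2 * m) =
      ∑ i ∈ Finset.range (2 * m + 1) with Odd i,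
        -2 * (2 * m).choose i * (a ^ i * b ^ (2 * m - i)) := by
  rw [sub_eq_add_neg a, add_pow, add_pow, ← Finset.sum_sub_distrib, Finset.sum_filter]
  refine Finset.sum_congr rfl fun i hi => ?_
  have := Nat.even_sub (Finset.mem_range_succ_iff.1 hi)
  split_ifs with odd_i
  · rw [Odd.neg_pow (by grind)]
    ring
  · rw [Even.neg_pow (by grind), sub_self]

theorem two_mul_sum_Ico_pow_sub_pow {m : ℕ} (hm : m ≠ 0) (d : ℕ) :
    2 * ∑ c ∈ Finset.Ico 1 (d + 1), (c : ℚ) ^ (2 * m) - (d : ℚ) ^ (2 * m) =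
      ∑ i ∈ Finset.range (2 * m + 1) with Even i,
        2 * (bernoulli' i * (2 * m + 1).choose i / (2 * m + 1)) * (d : ℚ) ^ (2 * m + 1 - i) := by
  have bernoulli_term (i : ℕ) : 2 * (bernoulli' i * (2 * m + 1).choose i *
      (d : ℚ) ^ (2 * m + 1 - i) / ((2 * m : ℕ) + 1)) =
        (if Even i then 2 * (bernoulli' i * (2 * m + 1).choose i / (2 * m + 1)) *
          (d : ℚ) ^ (2 * m + 1 - i) else 0) + if i = 1 then (d : ℚ) ^ (2 * m) else 0 := by
    split_ifs with even_i i_eq i_eq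
    · grind
    · push_cast
      ring
    · subst i_eq
      push_cast [Nat.choose_one_right, bernoulli'_one, Nat.add_sub_cancel]
      field_simp
      ring
    · rw [bernoulli'_eq_zero_of_odd (Nat.not_even_iff_odd.1 even_i) (by grind)]
      simp
  rw [sum_Ico_pow, Finset.mul_sum, Finset.sum_congr rfl fun i _ => bernoulli_term i,
    Finset.sum_add_distrib, Finset.sum_ite_eq', if_pos (Finset.mem_range.2 (by omega)),
    add_sub_cancel_right, Finset.sum_filter]

theorem liouville_identity_pow {m n : ℕ} :
    ∑ q ∈ liouvilleSolutions n, (((q.1.1 : ℚ) - q.2.1) ^ (2 * (m + 1)) -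
        ((q.1.1 : ℚ) + q.2.1) ^ (2 * (m + 1))) =
      ∑ d ∈ n.divisors, (2 * n * (d : ℚ) ^ (2 * m + 1) - (d : ℚ) ^ (2 * m + 3) -
        (2 * ∑ c ∈ Finset.Ico 1 (d + 1), (c : ℚ) ^ (2 * (m + 1)) - (d : ℚ) ^ (2 * (m + 1)))) := by
  have identity := liouville_identity (n := n) (fun x : ℤ => (x : ℚ) ^ (2 * (m + 1)))
    fun x => by rw [Int.cast_neg, (even_two_mul _).neg_pow]
  push_cast at identity
  rw [identity]
  refine Finset.sum_congr rfl fun d hd => ?_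
  have cast_n : (n : ℚ) = d * (n / d : ℕ) := by
    rw [← Nat.cast_mul, Nat.mul_div_cancel' (Nat.dvd_of_mem_divisors hd)]
  rw [cast_n]
  ring

theorem two_smul_eulerDerivation_sigmaSeries (m : ℕ) :
    (2 : ℚ) • eulerDerivation ℚ (sigmaSeries (2 * m + 1)) =
      ∑ i ∈ Finset.range (2 * (m + 1) + 1) with Odd i, (-2 * (2 * (m + 1)).choose i : ℚ) •
          (sigmaSeries i * sigmaSeries (2 * (m + 1) - i)) +
        sigmaSeries (2 * m + 3) +
        ∑ i ∈ Finset.range (2 * (m + 1) + 1) with Even i,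
          (2 * (bernoulli' i * (2 * (m + 1) + 1).choose i / (2 * (m + 1) + 1)) : ℚ) •
            sigmaSeries (2 * (m + 1) + 1 - i) := by
  ext n
  have identity := liouville_identity_pow (m := m) (n := n)
  simp only [sub_pow_two_mul_sub_add_pow_two_mul, two_mul_sum_Ico_pow_sub_pow m.succ_ne_zero,
    Finset.sum_sub_distrib] at identity
  rw [Finset.sum_comm, Finset.sum_comm (s := n.divisors)] at identity
  simp only [sigmaSeries, map_add, map_sum, map_smul, smul_eq_mul, coeff_eulerDerivation,
    coeff_divisorSeries, coeff_divisorSeries_mul_divisorSeries, Finset.mul_sum]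
  push_cast at identity ⊢
  simp only [← mul_assoc] at identity ⊢
  linear_combination -identity

/-- The algebra generated by the series `G_k` with `k` odd, the ring of quasimodular forms. -/
noncomputable def oddSigmaSubalgebra : Subalgebra ℚ (PowerSeries ℚ) :=
  Algebra.adjoin ℚ (sigmaSeries '' {k | Odd k})

theorem sigmaSeries_mem_oddSigmaSubalgebra {k : ℕ} (hk : Odd k) :
    sigmaSeries k ∈ oddSigmaSubalgebra :=
  Algebra.subset_adjoin ⟨k, hk, rfl⟩

theorem oddSigmaSubalgebra_le_macSubalgebra : oddSigmaSubalgebra ≤ macSubalgebra :=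
  Algebra.adjoin_le fun _ ⟨_, hk, h⟩ => h ▸ sigmaSeries_mem_macSubalgebra hk.pos.ne'

theorem eulerDerivation_sigmaSeries_mem_oddSigmaSubalgebra {k : ℕ} (hk : Odd k) :
    eulerDerivation ℚ (sigmaSeries k) ∈ oddSigmaSubalgebra := by
  obtain ⟨m, rfl⟩ := hk
  rw [← Subalgebra.mem_toSubmodule, ← Submodule.smul_mem_iff _ (two_ne_zero (α := ℚ)),
    two_smul_eulerDerivation_sigmaSeries, Subalgebra.mem_toSubmodule]
  refine add_mem (add_mem (sum_mem fun i hi => ?_) ?_) (sum_mem fun i hi => ?_)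
  · simp only [Finset.mem_filter, Finset.mem_range] at hi
    exact Subalgebra.smul_mem _ (mul_mem (sigmaSeries_mem_oddSigmaSubalgebra hi.2)
      (sigmaSeries_mem_oddSigmaSubalgebra (by grind))) _
  · exact sigmaSeries_mem_oddSigmaSubalgebra (by grind)
  · simp only [Finset.mem_filter, Finset.mem_range] at hi
    exact Subalgebra.smul_mem _ (sigmaSeries_mem_oddSigmaSubalgebra (by grind)) _

theorem eulerDerivation_mem_oddSigmaSubalgebra {f : PowerSeries ℚ} (hf : f ∈ oddSigmaSubalgebra) :
    eulerDerivation ℚ f ∈ oddSigmaSubalgebra := by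
  induction hf using Algebra.adjoin_induction with
  | mem f hf =>
    obtain ⟨k, hk, rfl⟩ := hf
    exact eulerDerivation_sigmaSeries_mem_oddSigmaSubalgebra hk
  | algebraMap r =>
    rw [Derivation.map_algebraMap]
    exact zero_mem _
  | add f g _ _ hf hg =>
    rw [map_add]
    exact add_mem hf hg
  | mul f g hf_mem hg_mem hf hg =>
    rw [Derivation.leibniz]
    exact add_mem (mul_mem hf_mem hg) (mul_mem hg_mem hf)

/-- The generating series `∑ₙ (∑_{d ∣ n} dᵏ p(n, d²)) Xⁿ`. -/
noncomputable def polynomialDivisorSeries (k : ℕ) (p : MvPolynomial (Fin 2) ℚ) : PowerSeries ℚ :=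
  PowerSeries.mk fun n =>
    ∑ d ∈ n.divisors, (d : ℚ) ^ k * MvPolynomial.eval ![(n : ℚ), (d : ℚ) ^ 2] p

theorem polynomialDivisorSeries_mem_oddSigmaSubalgebra {k : ℕ} (hk : Odd k)
    (p : MvPolynomial (Fin 2) ℚ) : polynomialDivisorSeries k p ∈ oddSigmaSubalgebra := by
  induction p using MvPolynomial.induction_on generalizing k with
  | C a =>
    convert Subalgebra.smul_mem _ (sigmaSeries_mem_oddSigmaSubalgebra hk) a using 1
    ext n
    simp [polynomialDivisorSeries, sigmaSeries, coeff_divisorSeries, Finset.mul_sum, mul_comm]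
  | add p q hp hq =>
    convert add_mem (hp hk) (hq hk) using 1
    ext n
    simp [polynomialDivisorSeries, mul_add, Finset.sum_add_distrib]
  | mul_X p i hp =>
    fin_cases i
    · convert eulerDerivation_mem_oddSigmaSubalgebra (hp hk) using 1
      ext n
      simp [polynomialDivisorSeries, coeff_eulerDerivation, Finset.mul_sum, mul_left_comm,
        mul_comm]
    · convert hp (k := k + 2) (by grind) using 1
      ext n
      simp [polynomialDivisorSeries, pow_add, mul_assoc, mul_comm]

/-! ### Detecting cubes of primes -/

section Detector

open scoped ArithmeticFunction.sigma

/-- A combination of divisor power sums vanishing at the cubes of primes but not at the primes: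
for `n = p³` one has `σ₃(n) = (1 + n)(1 + n²)` and `σ₉(n) = (1 + n³)(1 + n⁶)`. -/
def sigmaDefect (n : ℕ) : ℤ :=
  (1 + n ^ 3) * (1 + n ^ 6) * σ 3 n - (1 + n) * (1 + n ^ 2) * σ 9 n

theorem sigmaDefect_prime_pow_three {p : ℕ} (hp : p.Prime) : sigmaDefect (p ^ 3) = 0 := by
  simp only [sigmaDefect, ArithmeticFunction.sigma_apply, Nat.sum_divisors_prime_pow hp,
    Finset.sum_range_succ, Finset.sum_range_zero]
  push_cast
  ring

theorem sigmaDefect_prime_neg {p : ℕ} (hp : p.Prime) : sigmaDefect p < 0 := by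
  have sigmaDefect_eq :
      sigmaDefect p = (p ^ 3 + 2 * p ^ 6 + p ^ 9) - (p + p ^ 2 + p ^ 10 + p ^ 11) := by
    simp only [sigmaDefect, ArithmeticFunction.sigma_apply, hp.sum_divisors]
    push_cast
    ring
  have two_le : (2 : ℤ) ≤ p := mod_cast hp.two_le
  have pow_mono {i j : ℕ} (hij : i ≤ j) : (p : ℤ) ^ i ≤ (p : ℤ) ^ j :=
    pow_le_pow_right₀ (by linarith) hij
  have four_mul_le : 4 * (p : ℤ) ^ 9 ≤ (p : ℤ) ^ 11 :=
    calc 4 * (p : ℤ) ^ 9 ≤ (p : ℤ) ^ 2 * (p : ℤ) ^ 9 := by gcongr; nlinarith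
      _ = (p : ℤ) ^ 11 := by ring
  have := pow_mono (i := 3) (j := 9) (by norm_num)
  have := pow_mono (i := 6) (j := 9) (by norm_num)
  have : (0 : ℤ) < p + p ^ 2 + p ^ 10 := by positivity
  rw [sigmaDefect_eq]
  linarith

theorem neg_lt_sigmaDefect {n : ℕ} (hn : n ≠ 0) : -(4 * n ^ 13 : ℤ) < sigmaDefect n := by
  have one_le : (1 : ℤ) ≤ n := mod_cast Nat.one_le_iff_ne_zero.2 hn
  have sigma_three_pos : (0 : ℤ) < σ 3 n := mod_cast ArithmeticFunction.sigma_pos 3 n hn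
  have sigma_nine_le : (σ 9 n : ℤ) ≤ n ^ 10 := mod_cast ArithmeticFunction.sigma_le_pow_succ 9 n
  have : (0 : ℤ) < (1 + n ^ 3) * (1 + n ^ 6) * σ 3 n := mul_pos (by positivity) sigma_three_pos
  have : (1 + n) * (1 + n ^ 2) * (σ 9 n : ℤ) ≤ 4 * n ^ 13 :=
    calc (1 + n) * (1 + n ^ 2) * (σ 9 n : ℤ)
      _ ≤ (n + n) * (n ^ 2 + n ^ 2) * n ^ 10 := by gcongr; exact one_le_pow₀ one_le
      _ = 4 * n ^ 13 := by ring
  rw [sigmaDefect]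
  linarith

/-- A nonnegative weight on the divisors of `n`, vanishing at all of them exactly when `n` is
`1`, a prime or the cube of a prime. -/
def divisorPenalty (n d : ℕ) : ℤ :=
  ((d ^ 2 - 1) * (d ^ 2 - n ^ 2) * (d ^ 6 - n ^ 2) * (d ^ 6 - n ^ 4)) ^ 2

theorem sum_divisorPenalty_prime {p : ℕ} (hp : p.Prime) :
    ∑ d ∈ p.divisors, d * divisorPenalty p d = 0 := by
  simp [hp.sum_divisors, divisorPenalty]

theorem sum_divisorPenalty_prime_pow_three {p : ℕ} (hp : p.Prime) :
    ∑ d ∈ (p ^ 3).divisors, d * divisorPenalty (p ^ 3) d = 0 := by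
  simp only [Nat.sum_divisors_prime_pow hp, Finset.sum_range_succ, Finset.sum_range_zero,
    divisorPenalty]
  push_cast
  ring

theorem divisorPenalty_minFac_ne_zero {n : ℕ} (hn : n ≠ 1) (n_not_prime : ¬ n.Prime)
    (n_not_cube : ¬ ∃ p : ℕ, p.Prime ∧ n = p ^ 3) : divisorPenalty n n.minFac ≠ 0 := by
  have prime_minFac := Nat.minFac_prime hn
  have ne_one := prime_minFac.ne_one
  have ne_self : n.minFac ≠ n := fun h => n_not_prime (h ▸ prime_minFac)
  have cube_ne : n.minFac ^ 3 ≠ n := fun h => n_not_cube ⟨_, prime_minFac, h.symm⟩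
  have cube_ne_sq : n.minFac ^ 3 ≠ n ^ 2 := by
    intro h
    obtain ⟨r, hr⟩ := n.minFac_dvd
    have sq : n.minFac = r ^ 2 := by
      refine Nat.eq_of_mul_eq_mul_left (pow_pos prime_minFac.pos 2) ?_
      rw [← mul_pow, ← hr, ← h]
      ring
    exact Nat.Prime.not_prime_pow le_rfl (sq ▸ prime_minFac)
  have sq_sub_sq_ne_zero {a b : ℕ} (hab : a ≠ b) : (a ^ 2 - b ^ 2 : ℤ) ≠ 0 :=
    sub_ne_zero.2 fun h => hab (Nat.pow_left_injective two_ne_zero (mod_cast h))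
  rw [show divisorPenalty n n.minFac = ((n.minFac ^ 2 - (1 : ℕ) ^ 2) * (n.minFac ^ 2 - n ^ 2) *
      ((n.minFac ^ 3 : ℕ) ^ 2 - n ^ 2) * ((n.minFac ^ 3 : ℕ) ^ 2 - (n ^ 2 : ℕ) ^ 2)) ^ 2 by
    rw [divisorPenalty]; push_cast; ring]
  exact pow_ne_zero 2 (mul_ne_zero (mul_ne_zero (mul_ne_zero (sq_sub_sq_ne_zero ne_one)
    (sq_sub_sq_ne_zero ne_self)) (sq_sub_sq_ne_zero cube_ne)) (sq_sub_sq_ne_zero cube_ne_sq))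

theorem sum_divisorPenalty_pos {n : ℕ} (hn : 2 ≤ n) (n_not_prime : ¬ n.Prime)
    (n_not_cube : ¬ ∃ p : ℕ, p.Prime ∧ n = p ^ 3) :
    0 < ∑ d ∈ n.divisors, d * divisorPenalty n d := by
  refine Finset.sum_pos' (fun d _ => mul_nonneg d.cast_nonneg (sq_nonneg _))
    ⟨n.minFac, Nat.mem_divisors.2 ⟨n.minFac_dvd, by omega⟩, ?_⟩
  have penalty_ne_zero := divisorPenalty_minFac_ne_zero (by omega) n_not_prime n_not_cube
  exact mul_pos (mod_cast n.minFac_pos) (lt_of_le_of_ne (sq_nonneg _) penalty_ne_zero.symm)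

/-- An integer-valued function whose zeros among the `n ≥ 2` are the cubes of primes. -/
def cubeDetector (n : ℕ) : ℤ :=
  4 * n ^ 13 * ∑ d ∈ n.divisors, d * divisorPenalty n d + sigmaDefect n

theorem cubeDetector_prime_ne_zero {p : ℕ} (hp : p.Prime) : cubeDetector p ≠ 0 := by
  rw [cubeDetector, sum_divisorPenalty_prime hp, mul_zero, zero_add]
  exact (sigmaDefect_prime_neg hp).ne

theorem cubeDetector_eq_zero_iff {n : ℕ} (hn : 2 ≤ n) :
    cubeDetector n = 0 ↔ ∃ p : ℕ, p.Prime ∧ n = p ^ 3 := by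
  constructor
  · intro detector_eq_zero
    by_contra n_not_cube
    have n_not_prime : ¬ n.Prime := fun hp => cubeDetector_prime_ne_zero hp detector_eq_zero
    have one_le_sum := sum_divisorPenalty_pos hn n_not_prime n_not_cube
    have := neg_lt_sigmaDefect (n := n) (by omega)
    have : 4 * (n : ℤ) ^ 13 * 1 ≤ 4 * n ^ 13 * ∑ d ∈ n.divisors, d * divisorPenalty n d := by
      gcongr
      exact one_le_sum
    rw [cubeDetector] at detector_eq_zero
    linarith
  · rintro ⟨p, hp, rfl⟩
    rw [cubeDetector, sum_divisorPenalty_prime_pow_three hp, sigmaDefect_prime_pow_three hp,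
      mul_zero, add_zero]

open MvPolynomial in
theorem mk_pow_mul_cubeDetector_mem_macSubalgebra (i : ℕ) :
    (PowerSeries.mk fun n : ℕ => (n : ℚ) ^ i * cubeDetector n) ∈ macSubalgebra := by
  convert oddSigmaSubalgebra_le_macSubalgebra (polynomialDivisorSeries_mem_oddSigmaSubalgebra
    odd_one (X 0 ^ i * (C 4 * X 0 ^ 13 *
      ((X 1 - 1) * (X 1 - X 0 ^ 2) * (X 1 ^ 3 - X 0 ^ 2) * (X 1 ^ 3 - X 0 ^ 4)) ^ 2 +
      (1 + X 0 ^ 3) * (1 + X 0 ^ 6) * X 1 - (1 + X 0) * (1 + X 0 ^ 2) * X 1 ^ 4))) using 1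
  ext n
  simp only [PowerSeries.coeff_mk, polynomialDivisorSeries, cubeDetector, sigmaDefect,
    divisorPenalty, ArithmeticFunction.sigma_apply, map_mul, map_add, map_sub, map_pow, map_one,
    eval_X, eval_C, Matrix.cons_val_zero, Matrix.cons_val_one]
  push_cast
  simp only [Finset.mul_sum, ← Finset.sum_add_distrib, ← Finset.sum_sub_distrib]
  exact Finset.sum_congr rfl fun d _ => by ring

end Detector

theorem exists_int_mul_coeff_eq_sum_macM {f : PowerSeries ℚ} (hf : f ∈ macSubalgebra) :
    ∃ N : ℤ, N ≠ 0 ∧ ∃ c : List ℕ+ →₀ ℤ,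
      ∀ n, N * PowerSeries.coeff n f = ∑ v ∈ c.support, (c v : ℚ) * macM v n := by
  obtain ⟨⟨N, hN⟩, hN_mem⟩ :=
    multiple_mem_span_of_mem_localization_span (nonZeroDivisors ℤ) ℚ _ f (mem_macSubalgebra.1 hf)
  obtain ⟨c, hc⟩ := Finsupp.mem_span_range_iff_exists_finsupp.1 hN_mem
  refine ⟨N, nonZeroDivisors.ne_zero hN, c, fun n => ?_⟩
  calc N * PowerSeries.coeff n f = PowerSeries.coeff n (N • f) := by
        rw [map_zsmul, zsmul_eq_mul]
    _ = PowerSeries.coeff n (∑ v ∈ c.support, c v • macSeries v) :=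
        congrArg (PowerSeries.coeff n) hc.symm
    _ = _ := by
        simp only [map_sum, map_zsmul, macSeries, PowerSeries.coeff_mk]
        simp only [zsmul_eq_mul]

theorem linearIndependent_pow_mul {R ι : Type*} [CommRing R] [IsDomain R] {x g : ι → R}
    (h : (x '' Function.support g).Infinite) :
    LinearIndependent R fun (i : ℕ) (j : ι) => x j ^ i * g j := by
  let weightedEval : Polynomial R →ₗ[R] ι → R :=
    LinearMap.pi fun j => g j • Polynomial.leval (x j)
  have ker_eq_bot : LinearMap.ker weightedEval = ⊥ := by
    refine LinearMap.ker_eq_bot'.2 fun P hP => ?_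
    refine Polynomial.eq_zero_of_infinite_isRoot P (h.mono ?_)
    rintro _ ⟨j, hj, rfl⟩
    exact (mul_eq_zero.1 (congrFun hP j)).resolve_left hj
  have family_eq : (fun (i : ℕ) (j : ι) => x j ^ i * g j) =
      weightedEval ∘ Polynomial.basisMonomials R := by
    ext i j
    simp [weightedEval, mul_comm]
  rw [family_eq]
  exact (Polynomial.basisMonomials R).linearIndependent.map' weightedEval ker_eq_bot

theorem linearIndependent_pow_mul_cubeDetector :
    LinearIndependent ℂ fun (i : ℕ) (n : ℕ+) => ((n : ℕ) : ℂ) ^ i * (cubeDetector n : ℂ) := by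
  refine linearIndependent_pow_mul (Set.Infinite.mono (s := (fun p : ℕ => (p : ℂ)) '' {p | p.Prime})
    ?_ (Nat.infinite_setOfPred_prime.image Nat.cast_injective.injOn))
  rintro _ ⟨p, hp, rfl⟩
  exact ⟨⟨p, hp.pos⟩, Int.cast_ne_zero.2 (cubeDetector_prime_ne_zero hp), rfl⟩

/-- There are infinitely many linearly independent integer linear combinations of
MacMahonesque functions of weight at most some `d ≥ 21` detecting the cubes of primes. -/
theorem infinitely_many_prime_cube_detectors :
    ∃ f : ℕ → (ℕ+ → ℚ),
      LinearIndependent ℂ (fun i => fun n : ℕ+ => (f i n : ℂ)) ∧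
      ∀ i : ℕ, ∃ d : ℕ, 21 ≤ d ∧
        ∃ (S : Finset (List ℕ+)) (c : List ℕ+ → ℤ),
          (∀ v ∈ S, weight v ≤ d) ∧
          (∀ n : ℕ+, f i n = ∑ v ∈ S, (c v : ℚ) * (macM v n : ℚ)) ∧
          (∀ n : ℕ+, 2 ≤ (n : ℕ) →
            (f i n = 0 ↔ ∃ p : ℕ, p.Prime ∧ (n : ℕ) = p ^ 3)) := by
  choose N hN c hc using fun i =>
    exists_int_mul_coeff_eq_sum_macM (mk_pow_mul_cubeDetector_mem_macSubalgebra i)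
  simp only [PowerSeries.coeff_mk] at hc
  refine ⟨fun i n => N i * ((n : ℕ) ^ i * cubeDetector n), ?_, fun i =>
    ⟨max 21 ((c i).support.sup weight), le_max_left _ _, (c i).support, c i,
      fun v hv => le_max_of_le_right (Finset.le_sup hv), fun n => hc i n, fun n hn => ?_⟩⟩
  · convert linearIndependent_pow_mul_cubeDetector.units_smul
      fun i => Units.mk0 (N i : ℂ) (Int.cast_ne_zero.2 (hN i)) using 1
    ext i n
    simp [Units.smul_def]
  · rw [← cubeDetector_eq_zero_iff hn]
    simp [hN i]
end

section
/- Let t ≥ 2 and 0 < r < t be integers with gcd(r, t) = 1, let ζ_t := e^{2πi/t}, and let k and ℓ be odd positive integers with ℓ > k. Then there exist complex constants c_{𝐚}(s), indexed by vectors 𝐚 of positive integers with |𝐚| ≤ k + 2ℓ and integers 0 ≤ s ≤ t − 1, only finitely many nonzero, such that for every positive integer n, b_{k,ℓ}^{r,t}(n) = Σ_{|𝐚| ≤ k+2ℓ} Σ_{s=0}^{t−1} c_{𝐚}(s)·ζ_t^{sn}·M_{𝐚}(n). -/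
open Complex

/-- The coefficient `b_{k,ℓ}^{r,t}(n)`. -/
def bFun (k l r t n : ℕ) : ℤ :=
  if n % t = r % t then
    ∑ d ∈ n.divisors, (((n : ℤ) ^ l + 1) * (d : ℤ) ^ k - ((n : ℤ) ^ k + 1) * (d : ℤ) ^ l)
  else
    ∑ d ∈ n.divisors, ((n : ℤ) ^ l + 1) * (d : ℤ) ^ k

/-! Splitting off the smallest part `s₁` presents the generating function of `macM v` as an
iterated tail sum `∑_{s₁ > 0} P(q ^ s₁) * ∑_{s₂ > s₁} ⋯`, where `P` generates the powers `m ^ v₁`.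
A product of two tail sums is a sum of three tail sums, according to how the running indices
compare, and a product of two power generating functions is a combination of such. Hence
multiplication by the divisor sum series `∑ σ_k(n) q ^ n`, `k ≥ 1`, preserves the span of the
generating functions of the `macM v`, raising weight plus length by at most `k + 1`.

Liouville's identity applied to `x ↦ x ^ (k + 1)` writes `q * d/dq` of an odd divisor sum series
as a polynomial in odd divisor sum series, so by iteration every `∑ (n ^ l + 1) * σ_k(n) q ^ n`
with `k` odd lies in that span. Finally `b_{k,ℓ}^{r,t}(n)` differs from `(n ^ l + 1) * σ_k(n)` by
`(n ^ k + 1) * σ_l(n)` restricted to `n ≡ r (mod t)`, and averaging over the twists by `t`-th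
roots of unity cuts out this progression. -/

namespace MacMahonesque

open PowerSeries Finset

section TailSum

variable {R : Type*} [CommRing R]

/-- The sequence of tails `N ↦ ∑_{s > N} f s` of a series of power series. The sum is truncated at
`s = n` in degree `n`, so it is the intended infinite sum when `X ^ s ∣ f s` for all `s`. -/
noncomputable def tailSum : (ℕ → R⟦X⟧) →ₗ[R] (ℕ → R⟦X⟧) where
  toFun f N := mk fun n => ∑ s ∈ Ioc N n, coeff n (f s)
  map_add' f g := by ext; simp [sum_add_distrib]
  map_smul' c f := by ext; simp [mul_sum]

lemma coeff_tailSum (f : ℕ → R⟦X⟧) (N n : ℕ) :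
    coeff n (tailSum f N) = ∑ s ∈ Ioc N n, coeff n (f s) := by
  simp [tailSum]

/-- Reduction modulo `X ^ (B + 1)`, under which tail sums become finite sums. -/
noncomputable abbrev modXPow (B : ℕ) : R⟦X⟧ →+* R⟦X⟧ ⧸ Ideal.span {(X : R⟦X⟧) ^ (B + 1)} :=
  Ideal.Quotient.mk _

lemma modXPow_eq_iff {B : ℕ} {f g : R⟦X⟧} :
    modXPow B f = modXPow B g ↔ ∀ n ≤ B, coeff n f = coeff n g := by
  simp only [Ideal.Quotient.eq, Ideal.mem_span_singleton, X_pow_dvd_iff, map_sub, sub_eq_zero,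
    Nat.lt_succ_iff]

lemma eq_of_forall_modXPow_eq {f g : R⟦X⟧} (h : ∀ B, modXPow B f = modXPow B g) : f = g :=
  PowerSeries.ext fun n => modXPow_eq_iff.1 (h n) n le_rfl

lemma modXPow_tailSum {f : ℕ → R⟦X⟧} (hf : ∀ s, X ^ s ∣ f s) (B N : ℕ) :
    modXPow B (tailSum f N) = ∑ s ∈ Ioc N B, modXPow B (f s) := by
  rw [← map_sum, modXPow_eq_iff]
  intro n hn
  rw [coeff_tailSum, map_sum]
  refine sum_subset (Ioc_subset_Ioc_right hn) fun s hs hs' => X_pow_dvd_iff.1 (hf s) n ?_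
  simp only [mem_Ioc] at hs hs'
  lia

lemma sum_Ioc_mul_sum_Ioc {A : Type*} [CommSemiring A] (g h : ℕ → A) (N B : ℕ) :
    (∑ s ∈ Ioc N B, g s) * ∑ s ∈ Ioc N B, h s =
      ∑ s ∈ Ioc N B, g s * ∑ s' ∈ Ioc s B, h s' + ∑ s ∈ Ioc N B, g s * h s +
        ∑ s ∈ Ioc N B, h s * ∑ s' ∈ Ioc s B, g s' := by
  rcases le_total B N with hBN | hNB
  · simp [Ioc_eq_empty_of_le hBN]
  · induction hNB using Nat.decreasingInduction with
    | self => simp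
    | of_succ N hN ih =>
      rw [← insert_Ioc_add_one_left_eq_Ioc hN]
      simp only [sum_insert (s := Ioc (N + 1) B) (a := N + 1) (by simp), add_mul, mul_add, ih]
      ring

lemma tailSum_mul_tailSum {g h : ℕ → R⟦X⟧} (hg : ∀ s, X ^ s ∣ g s) (hh : ∀ s, X ^ s ∣ h s) :
    tailSum g * tailSum h =
      tailSum (g * tailSum h) + tailSum (g * h) + tailSum (h * tailSum g) := by
  funext N
  refine eq_of_forall_modXPow_eq fun B => ?_
  simp only [Pi.mul_apply, Pi.add_apply, map_mul, map_add, modXPow_tailSum hg, modXPow_tailSum hh,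
    modXPow_tailSum (f := g * tailSum h) fun s => (hg s).mul_right _,
    modXPow_tailSum (f := g * h) fun s => (hg s).mul_right _,
    modXPow_tailSum (f := h * tailSum g) fun s => (hh s).mul_right _, sum_Ioc_mul_sum_Ioc]

end TailSum

section ExpandAll

variable {R : Type*} [CommRing R]

/-- The sequence `s ↦ F(X ^ s)`. Its value at `s = 0` is irrelevant and is set to `F`. -/
noncomputable def expandAll : R⟦X⟧ →ₐ[R] (ℕ → R⟦X⟧) :=
  AlgHom.pi fun s => if hs : s = 0 then AlgHom.id R R⟦X⟧ else PowerSeries.expand s hs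

lemma expandAll_apply {s : ℕ} (hs : s ≠ 0) (F : R⟦X⟧) :
    expandAll F s = PowerSeries.expand s hs F := by
  simp [expandAll, hs]

lemma X_pow_dvd_expandAll {F : R⟦X⟧} (hF : X ∣ F) (s : ℕ) : X ^ s ∣ expandAll F s := by
  rcases eq_or_ne s 0 with rfl | hs
  · simp
  · rw [expandAll_apply hs, ← expand_X s hs]
    exact map_dvd _ hF

lemma modXPow_expandAll {F : R⟦X⟧} (hF : X ∣ F) {s : ℕ} (hs : s ≠ 0) (B : ℕ) :
    modXPow B (expandAll F s) = ∑ m ∈ Icc 1 B, modXPow B (monomial (m * s) (coeff m F)) := by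
  rw [← map_sum, modXPow_eq_iff]
  intro n hn
  simp only [expandAll_apply hs, coeff_expand, map_sum, coeff_monomial]
  split_ifs with hsn
  · obtain ⟨m, rfl⟩ := hsn
    rw [Nat.mul_div_cancel_left m (Nat.pos_of_ne_zero hs)]
    rcases Nat.eq_zero_or_pos m with rfl | hm
    · simpa [X_dvd_iff, hs] using hF
    · have hmB : m ∈ Icc 1 B := mem_Icc.2 ⟨hm, (Nat.le_mul_of_pos_left m hs.bot_lt).trans hn⟩
      simp [mul_comm s m, hs, hmB]
  · exact (sum_eq_zero fun m _ => if_neg fun h => hsn ⟨m, by rw [h, mul_comm]⟩).symm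

end ExpandAll

section MacMTail

/-- The generating function of the powers `m ↦ m ^ a`. -/
noncomputable def powSeries (a : ℕ) : ℚ⟦X⟧ := mk fun m => (m : ℚ) ^ a

@[simp] lemma coeff_powSeries (a m : ℕ) : coeff m (powSeries a) = (m : ℚ) ^ a := coeff_mk _ _

lemma X_dvd_powSeries {a : ℕ} (ha : a ≠ 0) : X ∣ powSeries a := by
  simp [X_dvd_iff, ← coeff_zero_eq_constantCoeff_apply, ha]

/-- The sequence over `N` of the generating functions of `macM v` restricted to the parts
`N < s₁ < s₂ < ⋯`. -/
noncomputable def macMTail : List ℕ+ → ℕ → ℚ⟦X⟧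
  | [] => 1
  | a :: v => tailSum (expandAll (powSeries a) * macMTail v)

lemma sum_piFinset_fin_succ {α M : Type*} [AddCommMonoid M] {n : ℕ} (S : Finset α)
    (F : (Fin (n + 1) → α) → M) :
    ∑ f ∈ Fintype.piFinset fun _ => S, F f =
      ∑ x ∈ S, ∑ g ∈ Fintype.piFinset fun _ => S, F (Fin.cons x g) := by
  rw [← sum_product']
  refine (sum_equiv (Fin.consEquiv fun _ => α) (fun p => ?_) fun p _ => rfl).symm
  simp [Fintype.mem_piFinset, Fin.forall_fin_succ]

lemma X_pow_dvd_expandAll_powSeries (a : ℕ+) (s : ℕ) : X ^ s ∣ expandAll (powSeries a) s :=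
  X_pow_dvd_expandAll (X_dvd_powSeries a.ne_zero) s

lemma modXPow_macMTail (v : List ℕ+) (B N : ℕ) :
    modXPow B (macMTail v N) =
      ∑ sm ∈ Fintype.piFinset fun _ : Fin v.length => Icc 1 B ×ˢ Icc 1 B,
        if (∀ i, N < (sm i).1) ∧ StrictMono fun i => (sm i).1 then
          ∏ i, modXPow B (monomial ((sm i).2 * (sm i).1) (((sm i).2 : ℚ) ^ (v.get i : ℕ)))
        else 0 := by
  induction v generalizing N with
  | nil => simp [macMTail, Subsingleton.strictMono]
  | cons a v ih =>
    have hIoc : Ioc N B = (Icc 1 B).filter (N < ·) := by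
      ext
      simp only [mem_Ioc, mem_filter, mem_Icc]
      lia
    have hdvd (s : ℕ) : X ^ s ∣ (expandAll (powSeries a) * macMTail v) s :=
      (X_pow_dvd_expandAll_powSeries a s).mul_right _
    have hmono (p : ℕ × ℕ) (sm : Fin v.length → ℕ × ℕ) :
        ((∀ i : Fin (v.length + 1), N < (Fin.cons (α := fun _ => ℕ × ℕ) p sm i).1) ∧
          StrictMono fun i : Fin (v.length + 1) => (Fin.cons (α := fun _ => ℕ × ℕ) p sm i).1) ↔
            N < p.1 ∧ (∀ i, p.1 < (sm i).1) ∧ StrictMono fun i => (sm i).1 := by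
      have hcons : (fun i : Fin (v.length + 1) => (Fin.cons (α := fun _ => ℕ × ℕ) p sm i).1) =
          Fin.cons p.1 fun i => (sm i).1 := Fin.comp_cons Prod.fst p sm
      rw [hcons, Fin.strictMono_cons, Fin.forall_fin_succ]
      exact ⟨fun h => ⟨h.1.1, h.2⟩, fun h => ⟨⟨h.1, fun i => h.1.trans (h.2.1 i)⟩, h.2⟩⟩
    simp only [List.length_cons]
    rw [macMTail, modXPow_tailSum hdvd, hIoc, sum_filter, sum_piFinset_fin_succ, sum_product]
    refine sum_congr rfl fun s hs => ?_
    have hs0 : s ≠ 0 := by simp only [mem_Icc] at hs; lia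
    simp only [hmono, ite_and (P := N < _)]
    split_ifs with hNs
    · rw [Pi.mul_apply, map_mul, modXPow_expandAll (X_dvd_powSeries a.ne_zero) hs0, sum_mul]
      refine sum_congr rfl fun m _ => ?_
      simp only [ih, mul_sum, mul_ite, mul_zero, coeff_powSeries, Fin.prod_univ_succ]
      rfl
    · simp

lemma coeff_macMTail_zero (v : List ℕ+) (n : ℕ) : coeff n (macMTail v 0) = macM v n := by
  have hsum := modXPow_macMTail v n 0
  simp only [← map_prod, ← map_zero (modXPow n), ← apply_ite, ← map_sum] at hsum
  rw [modXPow_eq_iff.1 hsum n le_rfl, macM, map_sum, Nat.cast_sum]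
  refine sum_congr rfl fun sm hsm => ?_
  have hpos (i : Fin v.length) : 0 < (sm i).1 := by
    have := Fintype.mem_piFinset.1 hsm i
    simp only [mem_product, mem_Icc] at this
    lia
  rw [prod_monomial]
  simp only [hpos, implies_true, true_and, apply_ite (coeff n), coeff_monomial, map_zero, ite_and]
  push_cast
  rfl

end MacMTail

section QDeriv

variable {R : Type*} [CommSemiring R]

/-- The Euler operator `X · d/dX`. -/
noncomputable def qDeriv : Derivation R R⟦X⟧ R⟦X⟧ := (X : R⟦X⟧) • d⁄dX R

lemma coeff_qDeriv (f : R⟦X⟧) (n : ℕ) : coeff n (qDeriv f) = n * coeff n f := by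
  cases n with
  | zero => simp [qDeriv]
  | succ n => simp [qDeriv, coeff_succ_X_mul, coeff_derivative, mul_comm]

lemma coeff_iterate_qDeriv (l : ℕ) (f : R⟦X⟧) (n : ℕ) :
    coeff n (qDeriv^[l] f) = (n : R) ^ l * coeff n f := by
  induction l with
  | zero => simp
  | succ l ih => rw [Function.iterate_succ_apply', coeff_qDeriv, ih, pow_succ', mul_assoc]

end QDeriv

section PowSpan

lemma qDeriv_powSeries (a : ℕ) : qDeriv (powSeries a) = powSeries (a + 1) := by
  ext n
  simp [coeff_qDeriv, pow_succ']

/-- The span of the series `powSeries j`, `j ∈ J`: the generating functions of the polynomials with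
exponents in `J`. -/
noncomputable def powSpan (J : Set ℕ) : Submodule ℚ ℚ⟦X⟧ := Submodule.span ℚ (powSeries '' J)

lemma powSeries_mem_powSpan {J : Set ℕ} {j : ℕ} (hj : j ∈ J) : powSeries j ∈ powSpan J :=
  Submodule.subset_span ⟨j, hj, rfl⟩

lemma qDeriv_mem_powSpan_Icc {d : ℕ} {F : ℚ⟦X⟧} (hF : F ∈ powSpan (Set.Icc 1 d)) :
    qDeriv F ∈ powSpan (Set.Icc 1 (d + 1)) := by
  refine Submodule.span_le (p := (powSpan _).comap qDeriv.toLinearMap).2 ?_ hF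
  rintro _ ⟨j, hj, rfl⟩
  have hmem : powSeries (j + 1) ∈ powSpan (Set.Icc 1 (d + 1)) :=
    powSeries_mem_powSpan ⟨Nat.le_add_left 1 j, Nat.succ_le_succ hj.2⟩
  rwa [← qDeriv_powSeries] at hmem

lemma coeff_powSeries_zero_mul {b : ℕ} (hb : b ≠ 0) (m : ℕ) :
    coeff m (powSeries 0 * powSeries b) = ∑ i ∈ Ico 1 (m + 1), (i : ℚ) ^ b := by
  rw [mul_comm, coeff_mul, Nat.sum_antidiagonal_eq_sum_range_succ_mk, range_eq_Ico,
    sum_eq_sum_Ico_succ_bot m.succ_pos]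
  simp [hb]

lemma powSeries_zero_mul_eq_sum_bernoulli {b : ℕ} (hb : b ≠ 0) :
    powSeries 0 * powSeries b =
      ∑ i ∈ range (b + 1), (bernoulli' i * (b + 1).choose i / (b + 1)) • powSeries (b + 1 - i) := by
  ext m
  rw [coeff_powSeries_zero_mul hb, sum_Ico_pow, map_sum]
  simp only [coeff_smul, coeff_powSeries, smul_eq_mul, div_mul_eq_mul_div]

lemma powSeries_mul_powSeries_mem {b : ℕ} (hb : b ≠ 0) (a : ℕ) :
    powSeries a * powSeries b ∈ powSpan (Set.Icc 1 (a + b + 1)) := by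
  induction a generalizing b with
  | zero =>
    rw [powSeries_zero_mul_eq_sum_bernoulli hb]
    refine Submodule.sum_mem _ fun i hi => Submodule.smul_mem _ _ (powSeries_mem_powSpan ?_)
    have := mem_range.1 hi
    exact ⟨by lia, by lia⟩
  | succ a ih =>
    have hleibniz : powSeries (a + 1) * powSeries b =
        qDeriv (powSeries a * powSeries b) - powSeries a * powSeries (b + 1) := by
      simp only [Derivation.leibniz, qDeriv_powSeries, smul_eq_mul]
      ring
    have hright := ih b.succ_ne_zero
    rw [Nat.succ_eq_add_one, ← add_assoc] at hright
    rw [hleibniz, add_right_comm a 1 b]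
    exact Submodule.sub_mem _ (qDeriv_mem_powSpan_Icc (ih hb)) hright

lemma two_smul_powSeries_zero_mul_sub_mem {p : ℕ} (hp : Even p) (hp0 : p ≠ 0) :
    (2 : ℚ) • (powSeries 0 * powSeries p) - powSeries p ∈ powSpan {j | Odd j ∧ j ≤ p + 1} := by
  have h1 : 1 ∈ range (p + 1) := by simpa using hp0.bot_lt
  rw [powSeries_zero_mul_eq_sum_bernoulli hp0, ← add_sum_erase _ _ h1, bernoulli'_one,
    Nat.choose_one_right, Nat.add_sub_cancel]
  have hcancel : (1 / 2 * ((p + 1 : ℕ) : ℚ) / (p + 1)) • powSeries p =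
      (1 / 2 : ℚ) • powSeries p := by
    congr 1
    push_cast
    field_simp
  rw [hcancel, smul_add, smul_smul, mul_one_div_cancel two_ne_zero, one_smul, add_sub_cancel_left]
  refine Submodule.smul_mem _ _ (Submodule.sum_mem _ fun i hi => ?_)
  obtain ⟨hi1, hip⟩ := mem_erase.1 hi
  rw [mem_range] at hip
  rcases Nat.even_or_odd i with heven | hodd
  · have hpi : Odd (p + 1 - i) := by grind
    exact Submodule.smul_mem _ _ (powSeries_mem_powSpan ⟨hpi, Nat.sub_le _ _⟩)
  · simp [bernoulli'_eq_zero_of_odd hodd (by have := hodd.pos; lia)]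

end PowSpan

section Stuffle

/-- The span of the sequences `macMTail v` with `|v| + ℓ(v) ≤ w`. -/
noncomputable def macMTailSpan (w : ℕ) : Submodule ℚ (ℕ → ℚ⟦X⟧) :=
  Submodule.span ℚ (macMTail '' {v | weight v + v.length ≤ w})

lemma macMTail_mem_macMTailSpan {v : List ℕ+} {w : ℕ} (h : weight v + v.length ≤ w) :
    macMTail v ∈ macMTailSpan w :=
  Submodule.subset_span ⟨v, h, rfl⟩

lemma macMTailSpan_mono : Monotone macMTailSpan := fun _ _ h =>
  Submodule.span_mono (Set.image_mono fun _ hv => le_trans hv h)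

lemma weight_cons (a : ℕ+) (v : List ℕ+) : weight (a :: v) = a + weight v := by simp [weight]

lemma tailSum_expandAll_mul_mem {d w : ℕ} {F : ℚ⟦X⟧} (hF : F ∈ powSpan (Set.Icc 1 d))
    {f : ℕ → ℚ⟦X⟧} (hf : f ∈ macMTailSpan w) :
    tailSum (expandAll F * f) ∈ macMTailSpan (d + 1 + w) := by
  induction hF, hf using Submodule.span_induction₂ with
  | mem_mem _ _ hF hf =>
    obtain ⟨j, ⟨hj1, hjd⟩, rfl⟩ := hF
    obtain ⟨v, hv : weight v + v.length ≤ w, rfl⟩ := hf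
    lift j to ℕ+ using hj1
    refine macMTail_mem_macMTailSpan (v := j :: v) ?_
    rw [weight_cons, List.length_cons]
    lia
  | zero_left => simp
  | zero_right => simp
  | add_left _ _ _ _ _ _ h₁ h₂ => simpa only [map_add, add_mul] using Submodule.add_mem _ h₁ h₂
  | add_right _ _ _ _ _ _ h₁ h₂ => simpa only [map_add, mul_add] using Submodule.add_mem _ h₁ h₂
  | smul_left c _ _ _ _ h =>
    simpa only [map_smul, smul_mul_assoc] using Submodule.smul_mem _ c h
  | smul_right c _ _ _ _ h =>
    simpa only [map_smul, mul_smul_comm] using Submodule.smul_mem _ c h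

lemma macMTail_singleton (a : ℕ+) : macMTail [a] = tailSum (expandAll (powSeries a)) := by
  simp [macMTail]

lemma macMTail_singleton_mul_macMTail_mem (a : ℕ+) (v : List ℕ+) :
    macMTail [a] * macMTail v ∈ macMTailSpan (a + 1 + (weight v + v.length)) := by
  induction v with
  | nil => simpa [macMTail, weight] using macMTail_mem_macMTailSpan (v := [a]) (by simp [weight])
  | cons b v ih =>
    have hab : powSeries a * powSeries b ∈ powSpan (Set.Icc 1 (a + b + 1)) :=
      powSeries_mul_powSeries_mem b.ne_zero a
    have hb : powSeries b ∈ powSpan (Set.Icc 1 (b : ℕ)) := powSeries_mem_powSpan ⟨b.pos, le_rfl⟩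
    have hstuffle : macMTail [a] * macMTail (b :: v) =
        macMTail (a :: b :: v) + tailSum (expandAll (powSeries a * powSeries b) * macMTail v) +
          tailSum (expandAll (powSeries b) * (macMTail [a] * macMTail v)) := by
      have hdvd (s : ℕ) : X ^ s ∣ (expandAll (powSeries b) * macMTail v) s :=
        (X_pow_dvd_expandAll_powSeries b s).mul_right _
      rw [macMTail_singleton, macMTail,
        tailSum_mul_tailSum (X_pow_dvd_expandAll_powSeries a) hdvd]
      simp only [macMTail, map_mul, mul_assoc, mul_comm (macMTail v)]
    have hw : weight (b :: v) + (b :: v).length = b + 1 + (weight v + v.length) := by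
      rw [weight_cons, List.length_cons]
      lia
    rw [hstuffle, hw]
    refine Submodule.add_mem _ (Submodule.add_mem _ ?_ ?_) ?_
    · refine macMTail_mem_macMTailSpan ?_
      simp only [weight_cons, List.length_cons]
      lia
    · exact macMTailSpan_mono (by lia) (tailSum_expandAll_mul_mem hab
        (macMTail_mem_macMTailSpan (v := v) le_rfl))
    · exact macMTailSpan_mono (by lia) (tailSum_expandAll_mul_mem hb ih)

lemma macMTail_singleton_mul_mem (a : ℕ+) {w : ℕ} {f : ℕ → ℚ⟦X⟧} (hf : f ∈ macMTailSpan w) :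
    macMTail [a] * f ∈ macMTailSpan (a + 1 + w) := by
  refine Submodule.span_le
    (p := (macMTailSpan (a + 1 + w)).comap (LinearMap.mulLeft ℚ (macMTail [a]))).2 ?_ hf
  rintro _ ⟨v, hv, rfl⟩
  exact macMTailSpan_mono (Nat.add_le_add_left hv _) (macMTail_singleton_mul_macMTail_mem a v)

end Stuffle

section Lambert

variable {R : Type*} [CommRing R]

/-- The Lambert series `∑_{s ≥ 1} F(X ^ s)`, meant for `F` without constant term. -/
noncomputable def lambert : R⟦X⟧ →ₗ[R] R⟦X⟧ :=
  LinearMap.proj 0 ∘ₗ tailSum ∘ₗ expandAll.toLinearMap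

lemma coeff_lambert (F : R⟦X⟧) (n : ℕ) : coeff n (lambert F) = ∑ d ∈ n.divisors, coeff d F := by
  have hexpand (s : ℕ) (hs : s ∈ Ioc 0 n) :
      coeff n (expandAll F s) = if s ∣ n then coeff (n / s) F else 0 := by
    rw [expandAll_apply (mem_Ioc.1 hs).1.ne', coeff_expand]
  simp only [lambert, LinearMap.comp_apply, LinearMap.proj_apply, AlgHom.toLinearMap_apply,
    coeff_tailSum]
  rw [sum_congr rfl hexpand, ← sum_filter, ← Nat.sum_div_divisors]
  rfl

/-- The generating function of the divisor sums `σ_a(n) = ∑_{d ∣ n} d ^ a`. -/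
noncomputable def sigmaSeries (a : ℕ) : ℚ⟦X⟧ := lambert (powSeries a)

lemma coeff_sigmaSeries (a n : ℕ) : coeff n (sigmaSeries a) = ∑ d ∈ n.divisors, (d : ℚ) ^ a := by
  simp [sigmaSeries, coeff_lambert]

lemma macMTail_singleton_zero (a : ℕ+) : macMTail [a] 0 = sigmaSeries a := by
  rw [macMTail_singleton]
  rfl

end Lambert

section Liouville

/-- The representations `((a, x), (b, y))` of `n = a * x + b * y` by positive integers. -/
def quads (n : ℕ) : Finset ((ℕ × ℕ) × ℕ × ℕ) :=
  (antidiagonal n).biUnion fun p => p.1.divisorsAntidiagonal ×ˢ p.2.divisorsAntidiagonal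

lemma mem_quads {n a x b y : ℕ} :
    ((a, x), (b, y)) ∈ quads n ↔ 0 < a ∧ 0 < x ∧ 0 < b ∧ 0 < y ∧ a * x + b * y = n := by
  simp only [quads, mem_biUnion, HasAntidiagonal.mem_antidiagonal, mem_product,
    Nat.mem_divisorsAntidiagonal, Prod.exists]
  constructor
  · rintro ⟨_, _, rfl, ⟨rfl, hax⟩, rfl, hby⟩
    simpa [Nat.pos_iff_ne_zero, not_or, and_assoc] using And.intro hax hby
  · rintro ⟨ha, hx, hb, hy, rfl⟩
    exact ⟨_, _, rfl, ⟨rfl, (mul_pos ha hx).ne'⟩, rfl, (mul_pos hb hy).ne'⟩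

variable {M : Type*} [AddCommMonoid M]

lemma sum_quads_eq_sum_antidiagonal (n : ℕ) (g : (ℕ × ℕ) × ℕ × ℕ → M) :
    ∑ q ∈ quads n, g q = ∑ p ∈ antidiagonal n,
      ∑ q ∈ p.1.divisorsAntidiagonal ×ˢ p.2.divisorsAntidiagonal, g q := by
  refine sum_biUnion fun p _ p' _ hne => disjoint_left.2 fun q hq hq' => hne ?_
  simp only [mem_product, Nat.mem_divisorsAntidiagonal] at hq hq'
  exact Prod.ext (hq.1.1.symm.trans hq'.1.1) (hq.2.1.symm.trans hq'.2.1)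

lemma coeff_lambert_mul_lambert {R : Type*} [CommRing R] (F G : R⟦X⟧) (n : ℕ) :
    coeff n (lambert F * lambert G) = ∑ q ∈ quads n, coeff q.1.1 F * coeff q.2.1 G := by
  rw [sum_quads_eq_sum_antidiagonal, coeff_mul]
  refine sum_congr rfl fun p _ => ?_
  rw [coeff_lambert, coeff_lambert, ← Nat.sum_divisorsAntidiagonal fun d _ => coeff d F,
    ← Nat.sum_divisorsAntidiagonal fun d _ => coeff d G, sum_mul_sum, sum_product]

lemma sum_quads_swap (n : ℕ) (g : (ℕ × ℕ) × ℕ × ℕ → M) :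
    ∑ q ∈ quads n, g q.swap = ∑ q ∈ quads n, g q := by
  refine sum_equiv (Equiv.prodComm _ _) ?_ fun _ _ => rfl
  rintro ⟨⟨a, x⟩, b, y⟩
  simp only [Equiv.prodComm_apply, Prod.swap_prod_mk, mem_quads, add_comm (a * x)]
  tauto

lemma sum_quads_dual (n : ℕ) (g : (ℕ × ℕ) × ℕ × ℕ → M) :
    ∑ q ∈ quads n, g (q.1.swap, q.2.swap) = ∑ q ∈ quads n, g q := by
  refine sum_equiv ((Equiv.prodComm _ _).prodCongr (Equiv.prodComm _ _)) ?_ fun _ _ => rfl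
  rintro ⟨⟨a, x⟩, b, y⟩
  simp only [Equiv.prodCongr_apply, Prod.map_apply, Equiv.prodComm_apply, Prod.swap_prod_mk,
    mem_quads, mul_comm a, mul_comm b]
  tauto

/-- The bijection comes from `a * x + b * y = (a + b) * y + a * (x - y)`. -/
lemma sum_quads_lt_conj (n : ℕ) (g : ℕ → ℕ → M) :
    ∑ q ∈ quads n with q.2.2 < q.1.2, g q.1.1 q.2.1 =
      ∑ q ∈ quads n with q.2.1 < q.1.1, g q.2.1 (q.1.1 - q.2.1) := by
  refine sum_nbij' (fun q => ((q.1.1 + q.2.1, q.2.2), (q.1.1, q.1.2 - q.2.2)))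
    (fun q => ((q.2.1, q.1.2 + q.2.2), (q.1.1 - q.2.1, q.1.2))) ?_ ?_ ?_ ?_ ?_
  · rintro ⟨⟨a, x⟩, b, y⟩ h
    simp only [mem_filter, mem_quads] at h ⊢
    obtain ⟨⟨ha, hx, hb, hy, rfl⟩, hyx⟩ := h
    obtain ⟨z, rfl⟩ := Nat.exists_eq_add_of_lt hyx
    refine ⟨⟨by lia, hy, ha, by lia, ?_⟩, by lia⟩
    rw [show y + z + 1 - y = z + 1 by lia]
    ring
  · rintro ⟨⟨a, x⟩, b, y⟩ h
    simp only [mem_filter, mem_quads] at h ⊢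
    obtain ⟨⟨ha, hx, hb, hy, rfl⟩, hba⟩ := h
    obtain ⟨z, rfl⟩ := Nat.exists_eq_add_of_lt hba
    refine ⟨⟨hb, by lia, by lia, hx, ?_⟩, by lia⟩
    rw [show b + z + 1 - b = z + 1 by lia]
    ring
  · rintro ⟨⟨a, x⟩, b, y⟩ h
    simp only [mem_filter] at h
    simp [h.2.le]
  · rintro ⟨⟨a, x⟩, b, y⟩ h
    simp only [mem_filter] at h
    simp [h.2.le]
  · rintro ⟨⟨a, x⟩, b, y⟩ -
    simp

lemma sum_quads_right_eq (n : ℕ) (h : ℕ → ℕ → ℕ → M) :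
    ∑ q ∈ quads n with q.1.2 = q.2.2, h q.1.1 q.2.1 q.1.2 =
      ∑ p ∈ n.divisorsAntidiagonal, ∑ i ∈ Ico 1 p.1, h i (p.1 - i) p.2 := by
  rw [sum_sigma']
  refine sum_nbij' (fun q => ⟨(q.1.1 + q.2.1, q.1.2), q.1.1⟩)
    (fun c => ((c.2, c.1.2), (c.1.1 - c.2, c.1.2))) ?_ ?_ ?_ ?_ ?_
  · rintro ⟨⟨a, x⟩, b, y⟩ hq
    simp only [mem_filter, mem_quads] at hq
    obtain ⟨⟨ha, hx, hb, -, rfl⟩, rfl⟩ := hq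
    simp only [mem_sigma, Nat.mem_divisorsAntidiagonal, mem_Ico, add_mul, true_and]
    exact ⟨by positivity, by lia, by lia⟩
  · rintro ⟨⟨d, e⟩, i⟩ hc
    simp only [mem_sigma, Nat.mem_divisorsAntidiagonal, mem_Ico] at hc
    obtain ⟨⟨rfl, hde⟩, hi, hid⟩ := hc
    have he : 0 < e := Nat.pos_of_ne_zero (right_ne_zero_of_mul hde)
    simp only [mem_filter, mem_quads, and_true]
    exact ⟨hi, he, by lia, he, by rw [← add_mul, Nat.add_sub_cancel' hid.le]⟩
  · rintro ⟨⟨a, x⟩, b, y⟩ hq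
    simp only [mem_filter] at hq
    simp [hq.2]
  · rintro ⟨⟨d, e⟩, i⟩ hc
    simp only [mem_sigma, mem_Ico] at hc
    simp [hc.2.2.le]
  · rintro ⟨⟨a, x⟩, b, y⟩ -
    simp

lemma sum_eq_sum_lt_add_sum_eq_add_sum_gt {ι α M : Type*} [LinearOrder α] [AddCommMonoid M]
    (s : Finset ι) (u v : ι → α) (g : ι → M) :
    ∑ i ∈ s, g i = ∑ i ∈ s with u i < v i, g i + ∑ i ∈ s with u i = v i, g i +
      ∑ i ∈ s with v i < u i, g i := by
  simp only [sum_filter, ← sum_add_distrib]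
  refine sum_congr rfl fun i _ => ?_
  rcases lt_trichotomy (u i) (v i) with h | h | h <;>
    simp [h, ne_of_lt, ne_of_gt, not_lt_of_gt]

lemma sum_quads_filter_swap {M : Type*} [AddCommMonoid M] (n : ℕ)
    (P : (ℕ × ℕ) × ℕ × ℕ → Prop) [DecidablePred P] (g : (ℕ × ℕ) × ℕ × ℕ → M) :
    ∑ q ∈ quads n with P q.swap, g q.swap = ∑ q ∈ quads n with P q, g q := by
  simp only [sum_filter, sum_quads_swap n fun q => if P q then g q else 0]

lemma sum_quads_left_eq {M : Type*} [AddCommMonoid M] (n : ℕ) (g : ℕ → M) :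
    ∑ q ∈ quads n with q.1.1 = q.2.1, g q.1.1 =
      ∑ p ∈ n.divisorsAntidiagonal, ∑ _i ∈ Ico 1 p.2, g p.1 := by
  have hdual : ∑ q ∈ quads n with q.1.1 = q.2.1, g q.1.1 =
      ∑ q ∈ quads n with q.1.2 = q.2.2, g q.1.2 := by
    simp only [sum_filter, ← sum_quads_dual n fun q => if q.1.1 = q.2.1 then g q.1.1 else 0,
      Prod.fst_swap]
  rw [hdual, sum_quads_right_eq n fun _ _ x => g x]
  refine sum_equiv (Equiv.prodComm _ _) (fun p => ?_) fun _ _ => rfl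
  exact Nat.swap_mem_divisorsAntidiagonal.symm

variable {R : Type*} [CommRing R] (f : ℤ → R) (n : ℕ)

lemma sum_quads_left_lt_sub_sum_quads_left_gt :
    ∑ q ∈ quads n with q.1.2 < q.2.2, f q.1.1 - ∑ q ∈ quads n with q.2.1 < q.1.1, f q.1.1 =
      ∑ q ∈ quads n with q.1.1 = q.2.1, f q.1.1 - ∑ q ∈ quads n with q.1.2 = q.2.2, f q.1.1 := by
  have hconj : ∑ q ∈ quads n with q.2.2 < q.1.2, f q.1.1 =
      ∑ q ∈ quads n with q.1.1 < q.2.1, f q.1.1 :=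
    (sum_quads_lt_conj n fun a _ => f a).trans
      (sum_quads_filter_swap n (fun q => q.1.1 < q.2.1) fun q => f q.1.1)
  have hx := sum_eq_sum_lt_add_sum_eq_add_sum_gt (quads n) (·.1.2) (·.2.2) fun q => f q.1.1
  have ha := sum_eq_sum_lt_add_sum_eq_add_sum_gt (quads n) (·.1.1) (·.2.1) fun q => f q.1.1
  linear_combination ha - hx - hconj

lemma sum_quads_sub (hf : f.Even) :
    ∑ q ∈ quads n, f (q.1.1 - q.2.1) =
      2 * ∑ q ∈ quads n with q.1.2 < q.2.2, f q.1.1 +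
        ∑ q ∈ quads n with q.1.1 = q.2.1, f 0 := by
  have hlt : ∑ q ∈ quads n with q.1.1 < q.2.1, f (q.1.1 - q.2.1) =
      ∑ q ∈ quads n with q.2.1 < q.1.1, f (q.1.1 - q.2.1) := by
    rw [← sum_quads_filter_swap]
    exact sum_congr rfl fun q _ => by rw [← hf, neg_sub]; rfl
  have heq : ∑ q ∈ quads n with q.1.1 = q.2.1, f (q.1.1 - q.2.1) =
      ∑ q ∈ quads n with q.1.1 = q.2.1, f 0 :=
    sum_congr rfl fun q hq => by rw [(mem_filter.1 hq).2, sub_self]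
  have hconj : ∑ q ∈ quads n with q.2.1 < q.1.1, f (q.1.1 - q.2.1) =
      ∑ q ∈ quads n with q.1.2 < q.2.2, f q.1.1 := calc
    _ = ∑ q ∈ quads n with q.2.1 < q.1.1, f (q.1.1 - q.2.1 : ℕ) :=
      sum_congr rfl fun q hq => by rw [Nat.cast_sub (mem_filter.1 hq).2.le]
    _ = ∑ q ∈ quads n with q.2.2 < q.1.2, f q.2.1 := (sum_quads_lt_conj n fun _ b => f b).symm
    _ = _ := sum_quads_filter_swap n (fun q => q.1.2 < q.2.2) fun q => f q.1.1
  rw [sum_eq_sum_lt_add_sum_eq_add_sum_gt (quads n) (·.1.1) (·.2.1), hlt, heq, hconj]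
  ring

lemma sum_quads_add :
    ∑ q ∈ quads n, f (q.1.1 + q.2.1) =
      2 * ∑ q ∈ quads n with q.2.1 < q.1.1, f q.1.1 +
        ∑ q ∈ quads n with q.1.2 = q.2.2, f (q.1.1 + q.2.1) := by
  have hlt : ∑ q ∈ quads n with q.1.2 < q.2.2, f (q.1.1 + q.2.1) =
      ∑ q ∈ quads n with q.2.2 < q.1.2, f (q.1.1 + q.2.1) := by
    rw [← sum_quads_filter_swap]
    exact sum_congr rfl fun q _ => by rw [add_comm]; rfl
  have hconj : ∑ q ∈ quads n with q.2.2 < q.1.2, f (q.1.1 + q.2.1) =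
      ∑ q ∈ quads n with q.2.1 < q.1.1, f q.1.1 := by
    rw [sum_quads_lt_conj n fun a b => f (a + b)]
    exact sum_congr rfl fun q hq => by rw [Nat.cast_sub (mem_filter.1 hq).2.le, add_sub_cancel]
  rw [sum_eq_sum_lt_add_sum_eq_add_sum_gt (quads n) (·.1.2) (·.2.2), hlt, hconj]
  ring

lemma liouville_identity (hf : f.Even) :
    ∑ q ∈ quads n, (f (q.1.1 - q.2.1) - f (q.1.1 + q.2.1)) =
      ∑ p ∈ n.divisorsAntidiagonal, ((p.2 - 1) * f 0 + (1 + 2 * p.2 - p.1) * f p.1 -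
        2 * ∑ i ∈ Ico 1 (p.1 + 1), f i) := by
  have hadd : ∑ q ∈ quads n with q.1.2 = q.2.2, f (q.1.1 + q.2.1) =
      ∑ p ∈ n.divisorsAntidiagonal, ∑ _i ∈ Ico 1 p.1, f p.1 := by
    rw [sum_quads_right_eq n fun a b _ => f (a + b)]
    exact sum_congr rfl fun p _ => sum_congr rfl fun i hi => by
      rw [Nat.cast_sub (mem_Ico.1 hi).2.le, add_sub_cancel]
  have hdiag : ∑ q ∈ quads n, (f (q.1.1 - q.2.1) - f (q.1.1 + q.2.1)) =
      2 * (∑ q ∈ quads n with q.1.1 = q.2.1, f q.1.1 -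
        ∑ q ∈ quads n with q.1.2 = q.2.2, f q.1.1) +
          ∑ q ∈ quads n with q.1.1 = q.2.1, f 0 -
            ∑ q ∈ quads n with q.1.2 = q.2.2, f (q.1.1 + q.2.1) := by
    rw [sum_sub_distrib, sum_quads_sub f n hf, sum_quads_add,
      ← sum_quads_left_lt_sub_sum_quads_left_gt]
    ring
  rw [hdiag, sum_quads_left_eq n fun a => f a, sum_quads_left_eq n fun _ => f 0, hadd,
    sum_quads_right_eq n fun a _ _ => f a, ← sum_sub_distrib, mul_sum, ← sum_add_distrib,
    ← sum_sub_distrib]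
  refine sum_congr rfl fun p hp => ?_
  have hp1 := Nat.one_le_iff_ne_zero.2 (Nat.left_ne_zero_of_mem_divisorsAntidiagonal hp)
  have hp2 := Nat.one_le_iff_ne_zero.2 (Nat.right_ne_zero_of_mem_divisorsAntidiagonal hp)
  rw [sum_Ico_succ_top hp1]
  simp only [sum_const, Nat.card_Ico, nsmul_eq_mul, Nat.cast_sub hp1, Nat.cast_sub hp2,
    Nat.cast_one]
  ring

end Liouville

section OddSigma

lemma coeff_sum_sigmaSeries_mul_sigmaSeries (p n : ℕ) :
    coeff n (∑ j ∈ range (p + 1), (((-1) ^ (p - j) - 1) * p.choose j : ℚ) •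
      (sigmaSeries j * sigmaSeries (p - j))) =
        ∑ q ∈ quads n, (((q.1.1 - q.2.1 : ℤ) : ℚ) ^ p - ((q.1.1 + q.2.1 : ℤ) : ℚ) ^ p) := by
  simp only [sigmaSeries, map_sum, coeff_smul, coeff_lambert_mul_lambert, coeff_powSeries,
    smul_eq_mul, mul_sum]
  rw [sum_comm]
  refine sum_congr rfl fun q _ => ?_
  push_cast
  rw [sub_eq_add_neg (q.1.1 : ℚ), add_pow, add_pow, ← sum_sub_distrib]
  refine sum_congr rfl fun j _ => ?_
  rw [neg_pow]
  ring

lemma two_smul_qDeriv_sigmaSeries {k : ℕ} (hk : Odd k) :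
    (2 : ℚ) • qDeriv (sigmaSeries k) =
      ∑ j ∈ range (k + 1 + 1), (((-1) ^ (k + 1 - j) - 1) * (k + 1).choose j : ℚ) •
          (sigmaSeries j * sigmaSeries (k + 1 - j)) +
        sigmaSeries (k + 2) +
        lambert ((2 : ℚ) • (powSeries 0 * powSeries (k + 1)) - powSeries (k + 1)) := by
  ext n
  have hp0 : k + 1 ≠ 0 := k.succ_ne_zero
  have hliouville := liouville_identity (fun z => (z : ℚ) ^ (k + 1)) n fun z => by
    push_cast
    exact hk.add_one.neg_pow _
  simp only [map_add, coeff_sum_sigmaSeries_mul_sigmaSeries, coeff_sigmaSeries, coeff_lambert,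
    coeff_qDeriv, map_sub, coeff_smul, smul_eq_mul, coeff_powSeries, coeff_powSeries_zero_mul hp0]
  rw [hliouville, ← sum_sub_distrib, ← Nat.sum_divisorsAntidiagonal fun d _ => (d : ℚ) ^ k,
    ← Nat.sum_divisorsAntidiagonal fun d _ => (d : ℚ) ^ (k + 2),
    ← Nat.sum_divisorsAntidiagonal fun d _ =>
      2 * ∑ i ∈ Ico 1 (d + 1), (i : ℚ) ^ (k + 1) - (d : ℚ) ^ (k + 1),
    ← sum_add_distrib, ← sum_add_distrib, mul_sum, mul_sum]
  refine sum_congr rfl fun p hp => ?_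
  rw [← (Nat.mem_divisorsAntidiagonal.1 hp).1]
  push_cast
  rw [zero_pow hp0]
  ring

/-- The span of the products `σ_{a₁} ⋯ σ_{aⱼ}` of divisor sum series with odd indices and weight
`(a₁ + 1) + ⋯ + (aⱼ + 1) ≤ w`: an elementary stand-in for quasimodular forms of weight `≤ w`. -/
noncomputable def oddSigmaSpan (w : ℕ) : Submodule ℚ ℚ⟦X⟧ :=
  Submodule.span ℚ
    ((fun l : List ℕ => (l.map sigmaSeries).prod) ''
      {l | (∀ a ∈ l, Odd a) ∧ (l.map (· + 1)).sum ≤ w})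

lemma oddSigmaSpan_mono : Monotone oddSigmaSpan := fun _ _ h =>
  Submodule.span_mono (Set.image_mono fun _ hl => ⟨hl.1, hl.2.trans h⟩)

lemma prod_sigmaSeries_mem_oddSigmaSpan {l : List ℕ} (hl : ∀ a ∈ l, Odd a) :
    (l.map sigmaSeries).prod ∈ oddSigmaSpan (l.map (· + 1)).sum :=
  Submodule.subset_span ⟨l, ⟨hl, le_rfl⟩, rfl⟩

lemma sigmaSeries_mem_oddSigmaSpan {a : ℕ} (ha : Odd a) :
    sigmaSeries a ∈ oddSigmaSpan (a + 1) := by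
  simpa using prod_sigmaSeries_mem_oddSigmaSpan (l := [a]) (by simpa using ha)

lemma mul_mem_oddSigmaSpan {w w' : ℕ} {f g : ℚ⟦X⟧} (hf : f ∈ oddSigmaSpan w)
    (hg : g ∈ oddSigmaSpan w') : f * g ∈ oddSigmaSpan (w + w') := by
  refine Submodule.mul_le.1 ?_ f hf g hg
  rw [oddSigmaSpan, oddSigmaSpan, Submodule.span_mul_span, Submodule.span_le, Set.mul_subset_iff]
  rintro _ ⟨l, hl, rfl⟩ _ ⟨l', hl', rfl⟩
  refine Submodule.subset_span ⟨l ++ l', ⟨?_, ?_⟩, by simp⟩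
  · exact List.forall_mem_append.2 ⟨hl.1, hl'.1⟩
  · simpa using add_le_add hl.2 hl'.2

lemma lambert_mem_oddSigmaSpan {d : ℕ} {F : ℚ⟦X⟧} (hF : F ∈ powSpan {j | Odd j ∧ j ≤ d}) :
    lambert F ∈ oddSigmaSpan (d + 1) := by
  refine Submodule.span_le (p := (oddSigmaSpan (d + 1)).comap lambert).2 ?_ hF
  rintro _ ⟨j, ⟨hj, hjd⟩, rfl⟩
  exact oddSigmaSpan_mono (Nat.succ_le_succ hjd) (sigmaSeries_mem_oddSigmaSpan hj)

lemma qDeriv_sigmaSeries_mem_oddSigmaSpan {k : ℕ} (hk : Odd k) :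
    qDeriv (sigmaSeries k) ∈ oddSigmaSpan (k + 3) := by
  rw [← Submodule.smul_mem_iff _ (two_ne_zero (α := ℚ)), two_smul_qDeriv_sigmaSeries hk]
  refine Submodule.add_mem _ (Submodule.add_mem _ ?_ ?_) ?_
  · refine Submodule.sum_mem _ fun j hj => ?_
    have hjk : j ≤ k + 1 := Nat.lt_succ_iff.1 (mem_range.1 hj)
    rcases Nat.even_or_odd (k + 1 - j) with h | h
    · simp [h.neg_one_pow]
    · have hj : Odd j := by grind
      have hprod := mul_mem_oddSigmaSpan (sigmaSeries_mem_oddSigmaSpan hj)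
        (sigmaSeries_mem_oddSigmaSpan h)
      exact Submodule.smul_mem _ _ (oddSigmaSpan_mono (by lia) hprod)
  · exact sigmaSeries_mem_oddSigmaSpan (hk.add_even even_two)
  · exact lambert_mem_oddSigmaSpan
      (two_smul_powSeries_zero_mul_sub_mem hk.add_one k.succ_ne_zero)

lemma qDeriv_mem_oddSigmaSpan {w : ℕ} {f : ℚ⟦X⟧} (hf : f ∈ oddSigmaSpan w) :
    qDeriv f ∈ oddSigmaSpan (w + 2) := by
  refine Submodule.span_le (p := (oddSigmaSpan (w + 2)).comap qDeriv.toLinearMap).2 ?_ hf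
  rintro _ ⟨l, ⟨hl, hlw⟩, rfl⟩
  refine oddSigmaSpan_mono (Nat.add_le_add_right hlw 2) ?_
  clear hlw
  induction l with
  | nil => simp
  | cons a l ih =>
    obtain ⟨ha, hl⟩ := List.forall_mem_cons.1 hl
    have hleft := mul_mem_oddSigmaSpan (sigmaSeries_mem_oddSigmaSpan ha) (ih hl)
    have hright := mul_mem_oddSigmaSpan (prod_sigmaSeries_mem_oddSigmaSpan hl)
      (qDeriv_sigmaSeries_mem_oddSigmaSpan ha)
    have hadd := Submodule.add_mem _ hleft (oddSigmaSpan_mono (by lia) hright)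
    simpa [add_assoc] using hadd

lemma iterate_qDeriv_sigmaSeries_mem_oddSigmaSpan {k : ℕ} (hk : Odd k) (l : ℕ) :
    qDeriv^[l] (sigmaSeries k) ∈ oddSigmaSpan (k + 1 + 2 * l) := by
  induction l with
  | zero => exact sigmaSeries_mem_oddSigmaSpan hk
  | succ l ih =>
    rw [Function.iterate_succ_apply']
    exact qDeriv_mem_oddSigmaSpan ih

lemma oddSigmaSpan_le_map_macMTailSpan (w : ℕ) :
    oddSigmaSpan w ≤ (macMTailSpan w).map (LinearMap.proj 0) := by
  refine Submodule.span_le.2 ?_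
  rintro _ ⟨l, ⟨hl, hlw⟩, rfl⟩
  refine Submodule.map_mono (macMTailSpan_mono hlw) ?_
  clear hlw
  induction l with
  | nil => exact ⟨1, macMTail_mem_macMTailSpan (v := []) (by simp [weight]), rfl⟩
  | cons a l ih =>
    obtain ⟨ha, hl⟩ := List.forall_mem_cons.1 hl
    obtain ⟨f, hf, hfl⟩ := ih hl
    lift a to ℕ+ using ha.pos
    refine ⟨macMTail [a] * f, macMTail_singleton_mul_mem a hf, ?_⟩
    simp [macMTail_singleton_zero, ← hfl]

end OddSigma

section Twist

variable {K : Type*} [Field K]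

/-- The coefficients `ζ ^ (s * n) * M_{𝐚}(n)` of the series `𝒰_{𝐚}(ζ ^ s * q)`, as a function
of `n ≥ 1`. -/
def twistedMacM (ζ : K) (p : List ℕ+ × ℕ) (n : ℕ+) : K :=
  ζ ^ (p.2 * n : ℕ) * macM p.1 n

/-- The span of the twisted MacMahonesque functions of weight `≤ w` with twists `ζ ^ s`,
`0 ≤ s < t`. -/
def twistedSpan (ζ : K) (t w : ℕ) : Submodule K (ℕ+ → K) :=
  Submodule.span K (twistedMacM ζ '' {p | weight p.1 ≤ w ∧ p.2 < t})

lemma twistedSpan_mono (ζ : K) (t : ℕ) : Monotone (twistedSpan ζ t) := fun _ _ h =>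
  Submodule.span_mono (Set.image_mono fun _ hp => ⟨hp.1.trans h, hp.2⟩)

lemma exists_eq_sum_of_mem_twistedSpan {ζ : K} {t w : ℕ} {f : ℕ+ → K}
    (hf : f ∈ twistedSpan ζ t w) :
    ∃ (S : Finset (List ℕ+)) (c : List ℕ+ → ℕ → K), (∀ v ∈ S, weight v ≤ w) ∧
      ∀ n : ℕ+, f n = ∑ v ∈ S, ∑ s ∈ range t, c v s * ζ ^ (s * n : ℕ) * macM v n := by
  obtain ⟨c, hc, rfl⟩ := (Finsupp.mem_span_image_iff_linearCombination K).1 hf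
  have hsupp {p} (hp : p ∈ c.support) : weight p.1 ≤ w ∧ p.2 < t :=
    (Finsupp.mem_supported _ _).1 hc hp
  refine ⟨c.support.image Prod.fst, fun v s => c (v, s), ?_, fun n => ?_⟩
  · exact forall_mem_image.2 fun p hp => (hsupp hp).1
  · have hsub : c.support ⊆ c.support.image Prod.fst ×ˢ range t := fun p hp =>
      mem_product.2 ⟨mem_image_of_mem _ hp, mem_range.2 (hsupp hp).2⟩
    rw [Finsupp.linearCombination_apply, Finsupp.sum_of_support_subset c hsub _ (by simp),
      Finset.sum_apply, sum_product]
    simp only [Pi.smul_apply, twistedMacM, smul_eq_mul, mul_assoc]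

lemma weight_le_of_weight_add_length_le {v : List ℕ+} {w : ℕ}
    (h : weight v + v.length ≤ w + 1) : weight v ≤ w := by
  cases v with
  | nil => simp [weight]
  | cons a v =>
    rw [List.length_cons] at h
    lia

lemma twisted_coeff_mem_twistedSpan [CharZero K] {ζ : K} {s t w : ℕ} (hs : s < t)
    {f : ℕ → ℚ⟦X⟧} (hf : f ∈ macMTailSpan (w + 1)) :
    (fun n : ℕ+ => ζ ^ (s * n : ℕ) * ((coeff n (f 0) : ℚ) : K)) ∈ twistedSpan ζ t w := by
  induction hf using Submodule.span_induction with
  | mem f hf =>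
    obtain ⟨v, hv, rfl⟩ := hf
    refine Submodule.subset_span ⟨(v, s), ⟨weight_le_of_weight_add_length_le hv, hs⟩, ?_⟩
    funext n
    rw [coeff_macMTail_zero, Rat.cast_natCast, twistedMacM]
  | zero =>
    convert Submodule.zero_mem _ using 1
    funext n
    simp
  | add f g _ _ hf hg =>
    convert Submodule.add_mem _ hf hg using 1
    funext n
    simp [mul_add]
  | smul a f _ hf =>
    convert Submodule.smul_mem _ (a : K) hf using 1
    funext n
    simp [mul_left_comm]

lemma twisted_sum_divisors_mem_twistedSpan [CharZero K] {ζ : K} {s t : ℕ} (hs : s < t) {k : ℕ}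
    (hk : Odd k) (l : ℕ) :
    (fun n : ℕ+ => ζ ^ (s * n : ℕ) * (((n : K) ^ l + 1) * ∑ d ∈ (n : ℕ).divisors, (d : K) ^ k)) ∈
      twistedSpan ζ t (k + 2 * l) := by
  have hsigma : qDeriv^[l] (sigmaSeries k) + sigmaSeries k ∈ oddSigmaSpan (k + 2 * l + 1) := by
    rw [add_right_comm]
    exact Submodule.add_mem _ (iterate_qDeriv_sigmaSeries_mem_oddSigmaSpan hk l)
      (oddSigmaSpan_mono (Nat.le_add_right _ _) (sigmaSeries_mem_oddSigmaSpan hk))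
  obtain ⟨f, hf, hf0⟩ := oddSigmaSpan_le_map_macMTailSpan _ hsigma
  rw [LinearMap.proj_apply] at hf0
  have hmem := twisted_coeff_mem_twistedSpan (ζ := ζ) hs hf
  simpa [hf0, coeff_iterate_qDeriv, coeff_sigmaSeries, add_mul] using hmem

lemma sum_range_inv_mul_inv_pow_mul_pow {ζ : K} {t : ℕ} (hζ : IsPrimitiveRoot ζ t) (ht : t ≠ 0)
    (r n : ℕ) :
    ∑ s ∈ range t, (t : K)⁻¹ * ζ⁻¹ ^ (s * r) * ζ ^ (s * n) = if n % t = r % t then 1 else 0 := by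
  have hζ0 : ζ ≠ 0 := hζ.ne_zero ht
  have hterm (s : ℕ) :
      (t : K)⁻¹ * ζ⁻¹ ^ (s * r) * ζ ^ (s * n) = (t : K)⁻¹ * (ζ ^ n / ζ ^ r) ^ s := by
    rw [mul_assoc, div_pow, ← pow_mul', ← pow_mul', inv_pow, inv_mul_eq_div (ζ ^ _)]
  have hone : ζ ^ n / ζ ^ r = 1 ↔ n % t = r % t := by
    rw [div_eq_one_iff_eq (pow_ne_zero r hζ0),
      (hζ.isOfFinOrder ht).pow_inj_mod, ← hζ.eq_orderOf]
  rw [sum_congr rfl fun s _ => hterm s, ← mul_sum]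
  split_ifs with h
  · have : NeZero t := ⟨ht⟩
    simp [hone.2 h, hζ.neZero'.out]
  · have hpow : (ζ ^ n / ζ ^ r) ^ t = 1 := by
      rw [div_pow, pow_right_comm, pow_right_comm ζ r, hζ.pow_eq_one, one_pow, one_pow, div_one]
    rw [geom_sum_eq (mt hone.1 h), hpow, sub_self, zero_div, mul_zero]

lemma bFun_eq_sub_sum_range {ζ : K} {t : ℕ} (hζ : IsPrimitiveRoot ζ t) (ht : t ≠ 0)
    (k l r n : ℕ) :
    (bFun k l r t n : K) = ((n : K) ^ l + 1) * ∑ d ∈ n.divisors, (d : K) ^ k -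
      ∑ s ∈ range t, (t : K)⁻¹ * ζ⁻¹ ^ (s * r) *
        (ζ ^ (s * n) * (((n : K) ^ k + 1) * ∑ d ∈ n.divisors, (d : K) ^ l)) := by
  simp only [← mul_assoc _ (ζ ^ _), ← sum_mul]
  rw [sum_range_inv_mul_inv_pow_mul_pow hζ ht, bFun]
  split_ifs <;> push_cast <;> simp [mul_sum]

lemma bFun_mem_twistedSpan [CharZero K] {ζ : K} {t : ℕ} (hζ : IsPrimitiveRoot ζ t) (ht : t ≠ 0)
    (r : ℕ) {k l : ℕ} (hk : Odd k) (hl : Odd l) :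
    (fun n : ℕ+ => (bFun k l r t n : K)) ∈ twistedSpan ζ t (k + l + max k l) := by
  have hkl := twistedSpan_mono ζ t (by lia : k + 2 * l ≤ k + l + max k l)
    (twisted_sum_divisors_mem_twistedSpan (Nat.pos_of_ne_zero ht) hk l)
  have hlk {s : ℕ} (hs : s ∈ range t) :=
    twistedSpan_mono ζ t (by lia : l + 2 * k ≤ k + l + max k l)
      (twisted_sum_divisors_mem_twistedSpan (mem_range.1 hs) hl k)
  convert Submodule.sub_mem _ hkl (Submodule.sum_mem _ fun s hs =>
    Submodule.smul_mem _ ((t : K)⁻¹ * ζ⁻¹ ^ (s * r)) (hlk hs)) using 1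
  funext n
  simp [bFun_eq_sub_sum_range hζ ht]

end Twist

end MacMahonesque

theorem bFun_eq_macMahonesque_combination_general {K : Type*} [Field K] [CharZero K] {ζ : K}
    {t : ℕ} (hζ : IsPrimitiveRoot ζ t) (ht : t ≠ 0) (r : ℕ) {k l : ℕ} (hk : Odd k) (hl : Odd l) :
    ∃ (S : Finset (List ℕ+)) (c : List ℕ+ → ℕ → K),
      (∀ v ∈ S, weight v ≤ k + l + max k l) ∧
      ∀ n : ℕ+, (bFun k l r t (n : ℕ) : K) =
        ∑ v ∈ S, ∑ s ∈ Finset.range t, c v s * ζ ^ (s * (n : ℕ)) * (macM v (n : ℕ) : K) :=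
  MacMahonesque.exists_eq_sum_of_mem_twistedSpan
    (MacMahonesque.bFun_mem_twistedSpan hζ ht r hk hl)

/-- `b_{k,ℓ}^{r,t}(n)` is a finite `ℂ`-linear combination of the coefficients
`ζ_t^{sn}·M_{𝐚}(n)` of the twisted MacMahonesque series, over `|𝐚| ≤ k + 2ℓ` and
`0 ≤ s ≤ t - 1`. -/
theorem bFun_eq_macMahonesque_combination (t r k l : ℕ) (ht : 2 ≤ t) (hr : 0 < r)
    (hrt : r < t) (hgcd : Nat.gcd r t = 1) (hk : Odd k) (hl : Odd l) (hkpos : 0 < k)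
    (hkl : k < l) :
    ∃ (S : Finset (List ℕ+)) (c : List ℕ+ → ℕ → ℂ),
      (∀ v ∈ S, weight v ≤ k + 2 * l) ∧
      ∀ n : ℕ+, (bFun k l r t (n : ℕ) : ℂ) =
        ∑ v ∈ S, ∑ s ∈ Finset.range t,
          c v s * Complex.exp (2 * Real.pi * I / (t : ℂ)) ^ (s * (n : ℕ)) *
            (macM v (n : ℕ) : ℂ) := by
  have ht0 : t ≠ 0 := by lia
  simpa only [max_eq_right hkl.le, add_assoc, ← two_mul] using
    bFun_eq_macMahonesque_combination_general (Complex.isPrimitiveRoot_exp t ht0) ht0 r hk hl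
end

section
/- Let t ≥ 2 and 0 < r < t be integers with gcd(r, t) = 1, and let ζ_t := e^{2πi/t}. Then there exists an infinite family (f_i)_{i ∈ ℕ} of functions from the positive integers to ℂ that is linearly independent over ℂ such that: each f_i has the form f_i(n) = Σ_{|𝐚| ≤ d_i} Σ_{s=0}^{t−1} c_{𝐚}(s)·ζ_t^{sn}·M_{𝐚}(n), a finite linear combination with complex coefficients c_{𝐚}(s) over vectors 𝐚 of positive integers with |𝐚| ≤ d_i for some d_i ≥ 7; each f_i(n) is a nonnegative real number for every positive integer n; and for every i and every integer n ≥ 2, f_i(n) = 0 if and only if n is prime and n ≡ r (mod t). -/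
/-!
Sum a function `Q m₁ m₂` over all `n = m₁ s₁ + m₂ s₂`, splitting the sum once according to the order
of `s₁, s₂` and once according to the order of `m₁, m₂`. The substitution
`m₁ s₁ + m₂ s₂ = (m₂ - m₁) s₂ + m₁ (s₁ + s₂)` turns the off-diagonal part of the second splitting
into a sum over `s₁ < s₂`, so for `Q a b = 2 a ^ (k + 1) - a ^ k b` the comparison expresses
`∑_{d ∣ n} d ^ k (n - d)` through the functions `M_{(k, l)}` and, by Faulhaber's formula, `M_{(k)}`.
The difference of two consecutive such sums is `D_k(n) = ∑_{d ∣ n} d ^ k (d - 1) (n - d)`, whose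
terms are nonnegative and vanish exactly at `d = 1` and `d = n`: it detects the primes. Adding the
divisor sum of `n` outside the prescribed residue classes, which finite Fourier analysis on `ℤ/t`
allows in the twisted span, gives the detectors. On squares of primes `p ≡ 1 mod t` they are
polynomials in `p` of pairwise distinct degrees, hence they are linearly independent.
-/

open Complex

open Polynomial

section Polynomials

variable {R ι : Type*}

lemma linearIndependent_of_injective_natDegree [Ring R] [NoZeroDivisors R] {P : ι → R[X]}
    (hP : ∀ i, P i ≠ 0) (hdeg : Function.Injective fun i => (P i).natDegree) :
    LinearIndependent R P := by
  refine linearIndependent_iff'.2 fun s g hg => ?_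
  by_contra! hne
  obtain ⟨k, hks, hk⟩ := hne
  classical
  obtain ⟨i, hi, hmax⟩ := (s.filter fun j => g j ≠ 0).exists_max_image
    (fun j => (P j).natDegree) ⟨k, Finset.mem_filter.2 ⟨hks, hk⟩⟩
  obtain ⟨his, hgi⟩ := Finset.mem_filter.1 hi
  have hcoeff : ∑ j ∈ s, g j * (P j).coeff (P i).natDegree = 0 := by
    simpa using congrArg (fun p => p.coeff (P i).natDegree) hg
  rw [Finset.sum_eq_single_of_mem i his] at hcoeff
  · exact mul_ne_zero hgi (leadingCoeff_ne_zero.2 (hP i)) hcoeff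
  · intro j hjs hji
    by_cases hgj : g j = 0
    · rw [hgj, zero_mul]
    · have hlt : (P j).natDegree < (P i).natDegree :=
        (hmax j (Finset.mem_filter.2 ⟨hjs, hgj⟩)).lt_of_ne (hdeg.ne hji)
      rw [coeff_eq_zero_of_natDegree_lt hlt, mul_zero]

lemma linearIndependent_eval_of_infinite_range [CommRing R] [IsDomain R] {P : ι → R[X]}
    (hP : LinearIndependent R P) {α : Type*} {x : α → R} (hx : (Set.range x).Infinite) :
    LinearIndependent R fun i a => (P i).eval (x a) := by
  refine hP.map' (LinearMap.pi fun a => leval (x a)) (LinearMap.ker_eq_bot'.2 fun p hp => ?_)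
  refine p.eq_zero_of_infinite_isRoot (hx.mono ?_)
  rintro _ ⟨a, rfl⟩
  exact congrFun hp a

end Polynomials

lemma exists_polynomial_eval_eq_sum_range_pow (R : Type*) [Semiring R] [Algebra ℚ R]
    (k : ℕ) : ∃ P : R[X], ∀ m : ℕ, P.eval (m : R) = ∑ j ∈ Finset.range m, (j : R) ^ k := by
  let B : ℚ[X] := C ((k + 1 : ℚ)⁻¹) * (Polynomial.bernoulli (k + 1) - C (_root_.bernoulli (k + 1)))
  have hB (m : ℕ) : B.eval (m : ℚ) = ∑ j ∈ Finset.range m, (j : ℚ) ^ k := by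
    rw [eval_C_mul, eval_sub, eval_C, ← Nat.succ_eq_add_one, ← sum_range_pow_eq_bernoulli_sub,
      inv_mul_cancel_left₀ k.cast_add_one_ne_zero]
  refine ⟨B.map (algebraMap ℚ R), fun m => ?_⟩
  rw [eval_natCast_map, hB, map_sum]
  simp only [map_pow, map_natCast]

/-- The quadruples `((m₁, s₁), (m₂, s₂))` of positive integers with `m₁ s₁ + m₂ s₂ = n`. Those with
`s₁ < s₂` index the sums defining `M_{(k, l)}(n)`. -/
def twoTermReps (n : ℕ) : Finset ((ℕ × ℕ) × (ℕ × ℕ)) :=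
  ((Finset.Icc 1 n ×ˢ Finset.Icc 1 n) ×ˢ (Finset.Icc 1 n ×ˢ Finset.Icc 1 n)).filter
    fun x => x.1.1 * x.1.2 + x.2.1 * x.2.2 = n

lemma mem_twoTermReps {n : ℕ} {x : (ℕ × ℕ) × (ℕ × ℕ)} : x ∈ twoTermReps n ↔
    (0 < x.1.1 ∧ 0 < x.1.2 ∧ 0 < x.2.1 ∧ 0 < x.2.2) ∧ x.1.1 * x.1.2 + x.2.1 * x.2.2 = n := by
  obtain ⟨⟨m₁, s₁⟩, m₂, s₂⟩ := x
  simp only [twoTermReps, Finset.mem_filter, Finset.mem_product, Finset.mem_Icc]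
  constructor
  · rintro ⟨⟨⟨hm₁, hs₁⟩, hm₂, hs₂⟩, h⟩
    exact ⟨⟨hm₁.1, hs₁.1, hm₂.1, hs₂.1⟩, h⟩
  · rintro ⟨⟨hm₁, hs₁, hm₂, hs₂⟩, rfl⟩
    have := Nat.le_mul_of_pos_right m₁ hs₁
    have := Nat.le_mul_of_pos_left s₁ hm₁
    have := Nat.le_mul_of_pos_right m₂ hs₂
    have := Nat.le_mul_of_pos_left s₂ hm₂
    omega

section TwoTermReps

variable {M : Type*} [AddCommMonoid M]

lemma sum_eq_sum_lt_add_sum_gt_add_sum_eq {ι α : Type*} [LinearOrder α] (s : Finset ι)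
    (p q : ι → α) (F : ι → M) :
    ∑ x ∈ s, F x = ∑ x ∈ s with p x < q x, F x + ∑ x ∈ s with q x < p x, F x
      + ∑ x ∈ s with p x = q x, F x := by
  simp only [Finset.sum_filter, ← Finset.sum_add_distrib]
  refine Finset.sum_congr rfl fun x _ => ?_
  rcases lt_trichotomy (p x) (q x) with h | h | h
  · simp [h, h.ne, h.not_gt]
  · simp [h]
  · simp [h, h.ne', h.not_gt]

lemma sum_twoTermReps_eq_sum_lt_add_sum_eq (n : ℕ) (key : ℕ × ℕ → ℕ) (F : ℕ × ℕ → ℕ × ℕ → M) :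
    ∑ x ∈ twoTermReps n, F x.1 x.2 =
      ∑ x ∈ twoTermReps n with key x.1 < key x.2, (F x.1 x.2 + F x.2 x.1)
        + ∑ x ∈ twoTermReps n with key x.1 = key x.2, F x.1 x.2 := by
  have hswap : ∑ x ∈ twoTermReps n with key x.2 < key x.1, F x.1 x.2 =
      ∑ x ∈ twoTermReps n with key x.1 < key x.2, F x.2 x.1 :=
    Finset.sum_equiv (Equiv.prodComm _ _)
      (by simp [mem_twoTermReps, and_comm, and_left_comm, add_comm]) (by simp)
  rw [sum_eq_sum_lt_add_sum_gt_add_sum_eq _ (fun x => key x.1) (fun x => key x.2), hswap,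
    Finset.sum_add_distrib]

/-- The identity `m₁ s₁ + m₂ s₂ = (m₂ - m₁) s₂ + m₁ (s₁ + s₂)` trades an inequality between the
`mᵢ` for one between the `sᵢ`. -/
lemma sum_twoTermReps_fst_lt_fst (n : ℕ) (F : ℕ → ℕ → M) :
    ∑ x ∈ twoTermReps n with x.1.1 < x.2.1, F x.1.1 x.2.1 =
      ∑ x ∈ twoTermReps n with x.1.2 < x.2.2, F x.2.1 (x.1.1 + x.2.1) := by
  refine Finset.sum_nbij' (fun x => ((x.2.1 - x.1.1, x.2.2), (x.1.1, x.1.2 + x.2.2)))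
    (fun x => ((x.2.1, x.2.2 - x.1.2), (x.1.1 + x.2.1, x.1.2))) ?_ ?_ ?_ ?_ ?_
  · rintro ⟨⟨m₁, s₁⟩, m₂, s₂⟩ h
    simp only [Finset.mem_filter, mem_twoTermReps] at h ⊢
    obtain ⟨⟨hpos, hn⟩, hlt⟩ := h
    obtain ⟨c, rfl⟩ := Nat.exists_eq_add_of_lt hlt
    refine ⟨⟨by omega, ?_⟩, by omega⟩
    rw [← hn, show m₁ + c + 1 - m₁ = c + 1 by omega]
    ring
  · rintro ⟨⟨m₁, s₁⟩, m₂, s₂⟩ h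
    simp only [Finset.mem_filter, mem_twoTermReps] at h ⊢
    obtain ⟨⟨hpos, hn⟩, hlt⟩ := h
    obtain ⟨c, rfl⟩ := Nat.exists_eq_add_of_lt hlt
    refine ⟨⟨by omega, ?_⟩, by omega⟩
    rw [← hn, show s₁ + c + 1 - s₁ = c + 1 by omega]
    ring
  · rintro ⟨⟨m₁, s₁⟩, m₂, s₂⟩ h
    simp only [Finset.mem_filter] at h
    simp only [Nat.add_sub_cancel, Nat.sub_add_cancel h.2.le]
  · rintro ⟨⟨m₁, s₁⟩, m₂, s₂⟩ h
    simp only [Finset.mem_filter] at h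
    simp only [Nat.add_sub_cancel, Nat.sub_add_cancel h.2.le]
  · rintro ⟨⟨m₁, s₁⟩, m₂, s₂⟩ h
    simp only [Finset.mem_filter] at h
    simp only [Nat.sub_add_cancel h.2.le]

lemma sum_twoTermReps_snd_eq_snd (n : ℕ) (F : ℕ → ℕ → ℕ → M) :
    ∑ x ∈ twoTermReps n with x.1.2 = x.2.2, F x.1.1 x.2.1 x.1.2 =
      ∑ y ∈ n.divisorsAntidiagonal, ∑ j ∈ Finset.Ico 1 y.1, F j (y.1 - j) y.2 := by
  rw [Finset.sum_sigma']
  refine Finset.sum_nbij' (fun x => ⟨(x.1.1 + x.2.1, x.1.2), x.1.1⟩)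
    (fun y => ((y.2, y.1.2), (y.1.1 - y.2, y.1.2))) ?_ ?_ ?_ ?_ ?_
  · rintro ⟨⟨m₁, s₁⟩, m₂, s₂⟩ h
    simp only [Finset.mem_filter, mem_twoTermReps, Finset.mem_sigma, Finset.mem_Ico,
      Nat.mem_divisorsAntidiagonal] at h ⊢
    obtain ⟨⟨⟨hm₁, hs₁, hm₂, -⟩, rfl⟩, rfl⟩ := h
    exact ⟨⟨add_mul _ _ _, by positivity⟩, by omega, by omega⟩
  · rintro ⟨⟨l, s⟩, j⟩ h
    simp only [Finset.mem_filter, mem_twoTermReps, Finset.mem_sigma, Finset.mem_Ico,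
      Nat.mem_divisorsAntidiagonal, and_true] at h ⊢
    obtain ⟨⟨hls, hn⟩, hj, hjl⟩ := h
    have hs : 0 < s := Nat.pos_of_ne_zero (by rintro rfl; exact hn hls.symm)
    exact ⟨by omega, by rw [← add_mul, Nat.add_sub_cancel' hjl.le, hls]⟩
  · rintro ⟨⟨m₁, s₁⟩, m₂, s₂⟩ h
    simp only [Finset.mem_filter] at h
    simp only [Nat.add_sub_cancel_left, h.2]
  · rintro ⟨⟨l, s⟩, j⟩ h
    simp only [Finset.mem_sigma, Finset.mem_Ico] at h
    simp only [Nat.add_sub_cancel' h.2.2.le]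
  · rintro ⟨⟨m₁, s₁⟩, m₂, s₂⟩ -
    simp only [Nat.add_sub_cancel_left]

lemma sum_twoTermReps_fst_eq_fst (n : ℕ) (Q : ℕ → ℕ → M) :
    ∑ x ∈ twoTermReps n with x.1.1 = x.2.1, Q x.1.1 x.2.1 =
      ∑ y ∈ n.divisorsAntidiagonal, (y.1 - 1) • Q y.2 y.2 := by
  have htranspose : ∑ x ∈ twoTermReps n with x.1.1 = x.2.1, Q x.1.1 x.2.1 =
      ∑ x ∈ twoTermReps n with x.1.2 = x.2.2, Q x.1.2 x.1.2 :=
    Finset.sum_equiv ((Equiv.prodComm _ _).prodCongr (Equiv.prodComm _ _))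
      (by simp [mem_twoTermReps, and_comm, and_left_comm, mul_comm])
      (by simp +contextual)
  rw [htranspose, sum_twoTermReps_snd_eq_snd n fun _ _ s => Q s s]
  simp only [Finset.sum_const, Nat.card_Ico]

/-- Both sides evaluate `∑ Q m₁ m₂` over `twoTermReps n`, the left one by comparing the `mᵢ` and the
right one by comparing the `sᵢ`. -/
lemma sum_twoTermReps_exchange (n : ℕ) (Q : ℕ → ℕ → M) :
    ∑ x ∈ twoTermReps n with x.1.2 < x.2.2, (Q x.2.1 (x.1.1 + x.2.1) + Q (x.1.1 + x.2.1) x.2.1)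
        + ∑ y ∈ n.divisorsAntidiagonal, (y.1 - 1) • Q y.2 y.2 =
      ∑ x ∈ twoTermReps n with x.1.2 < x.2.2, (Q x.1.1 x.2.1 + Q x.2.1 x.1.1)
        + ∑ l ∈ n.divisors, ∑ j ∈ Finset.Ico 1 l, Q j (l - j) := by
  have hfst := sum_twoTermReps_eq_sum_lt_add_sum_eq n Prod.fst fun y z => Q y.1 z.1
  have hsnd := sum_twoTermReps_eq_sum_lt_add_sum_eq n Prod.snd fun y z => Q y.1 z.1
  rw [sum_twoTermReps_fst_lt_fst n fun a b => Q a b + Q b a, sum_twoTermReps_fst_eq_fst] at hfst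
  rw [sum_twoTermReps_snd_eq_snd n fun a b _ => Q a b,
    Nat.sum_divisorsAntidiagonal fun l _ => ∑ j ∈ Finset.Ico 1 l, Q j (l - j)] at hsnd
  exact hfst.symm.trans hsnd

end TwoTermReps

lemma macM_singleton (k : ℕ+) (n : ℕ) : macM [k] n = ∑ d ∈ n.divisors, d ^ (k : ℕ) := by
  unfold macM
  rw [← Finset.sum_filter]
  change ∑ sm ∈ (Fintype.piFinset fun _ : Fin 1 => Finset.Icc 1 n ×ˢ Finset.Icc 1 n) with
    ((∀ i j : Fin 1, i < j → (sm i).1 < (sm j).1) ∧ n = ∑ i : Fin 1, (sm i).2 * (sm i).1),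
     ∏ i : Fin 1, (sm i).2 ^ ([k].get i : ℕ) = _
  refine Finset.sum_nbij' (fun sm => (sm 0).2) (fun d _ => (n / d, d)) ?_ ?_ ?_ ?_ ?_
  · intro sm h
    simp only [Finset.mem_filter, Fintype.mem_piFinset, Finset.mem_product, Finset.mem_Icc,
      Fin.sum_univ_one] at h
    have := h.1 0
    exact Nat.mem_divisors.2 ⟨⟨_, h.2.2⟩, by omega⟩
  · intro d hd
    have hpos := Nat.pos_of_mem_divisors hd
    have hle := Nat.divisor_le hd
    simp only [Finset.mem_filter, Fintype.mem_piFinset, Finset.mem_product, Finset.mem_Icc,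
      Fin.sum_univ_one]
    exact ⟨fun _ => ⟨⟨Nat.div_pos hle hpos, Nat.div_le_self n d⟩, hpos, hle⟩,
      fun i j hij => absurd hij (by omega), (Nat.mul_div_cancel' (Nat.dvd_of_mem_divisors hd)).symm⟩
  · intro sm h
    simp only [Finset.mem_filter, Fintype.mem_piFinset, Finset.mem_product, Finset.mem_Icc,
      Fin.sum_univ_one] at h
    have hpos := (h.1 0).2.1
    funext i
    rw [Subsingleton.elim i 0, Nat.div_eq_of_eq_mul_right hpos h.2.2]
  · exact fun d _ => rfl
  · exact fun sm _ => Fin.prod_univ_one _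

lemma macM_pair (k l : ℕ+) (n : ℕ) : macM [k, l] n =
    ∑ x ∈ twoTermReps n with x.1.2 < x.2.2, x.1.1 ^ (k : ℕ) * x.2.1 ^ (l : ℕ) := by
  unfold macM
  rw [← Finset.sum_filter]
  change ∑ sm ∈ (Fintype.piFinset fun _ : Fin 2 => Finset.Icc 1 n ×ˢ Finset.Icc 1 n) with
    ((∀ i j : Fin 2, i < j → (sm i).1 < (sm j).1) ∧ n = ∑ i : Fin 2, (sm i).2 * (sm i).1),
     ∏ i : Fin 2, (sm i).2 ^ ([k, l].get i : ℕ) = _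
  refine Finset.sum_nbij' (fun sm => (((sm 0).2, (sm 0).1), ((sm 1).2, (sm 1).1)))
    (fun x => ![(x.1.2, x.1.1), (x.2.2, x.2.1)]) ?_ ?_ ?_ ?_ ?_
  · intro sm h
    simp only [Finset.mem_filter, Fintype.mem_piFinset, Finset.mem_product, Finset.mem_Icc,
      mem_twoTermReps, Fin.sum_univ_two] at h ⊢
    have h0 := h.1 0
    have h1 := h.1 1
    exact ⟨⟨by omega, h.2.2.symm⟩, h.2.1 0 1 (by decide)⟩
  · rintro ⟨⟨m₁, s₁⟩, m₂, s₂⟩ h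
    simp only [twoTermReps, Finset.mem_filter, Fintype.mem_piFinset, Finset.mem_product,
      Finset.mem_Icc, Fin.sum_univ_two, Fin.forall_fin_two] at h ⊢
    simp only [Fin.isValue, Matrix.cons_val_zero, Matrix.cons_val_one, Matrix.cons_val_fin_one,
      lt_self_iff_false, imp_self, zero_lt_one, forall_const, true_and, not_lt_zero,
      IsEmpty.forall_iff, and_self, and_true]
    omega
  · intro sm _
    funext i
    fin_cases i <;> rfl
  · exact fun x _ => rfl
  · exact fun sm _ => Fin.prod_univ_two _

/-- The complex span of the functions `n ↦ M_{𝐚}(n)` on the positive integers. -/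
def macMSpan : Submodule ℂ (ℕ+ → ℂ) :=
  Submodule.span ℂ (Set.range fun (v : List ℕ+) (n : ℕ+) => (macM v n : ℂ))

lemma macM_mem_macMSpan (v : List ℕ+) : (fun n : ℕ+ => (macM v n : ℂ)) ∈ macMSpan :=
  Submodule.subset_span ⟨v, rfl⟩

lemma sum_divisors_pow_mem_macMSpan {k : ℕ} (hk : 0 < k) :
    (fun n : ℕ+ => ∑ d ∈ (n : ℕ).divisors, (d : ℂ) ^ k) ∈ macMSpan := by
  lift k to ℕ+ using hk
  simpa [macM_singleton] using macM_mem_macMSpan [k]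

lemma sum_twoTermReps_pow_mul_pow_mem_macMSpan {k l : ℕ} (hk : 0 < k) (hl : 0 < l) :
    (fun n : ℕ+ => ∑ x ∈ twoTermReps n with x.1.2 < x.2.2, (x.1.1 : ℂ) ^ k * (x.2.1 : ℂ) ^ l) ∈
      macMSpan := by
  lift k to ℕ+ using hk
  lift l to ℕ+ using hl
  simpa [macM_pair] using macM_mem_macMSpan [k, l]

lemma sum_divisors_eval_mem_macMSpan {P : ℂ[X]} (hP : P.eval 0 = 0) :
    (fun n : ℕ+ => ∑ d ∈ (n : ℕ).divisors, P.eval (d : ℂ)) ∈ macMSpan := by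
  have hsum : (fun n : ℕ+ => ∑ d ∈ (n : ℕ).divisors, P.eval (d : ℂ)) =
      ∑ k ∈ Finset.range (P.natDegree + 1),
        P.coeff k • fun n : ℕ+ => ∑ d ∈ (n : ℕ).divisors, (d : ℂ) ^ k := by
    funext n
    simp only [eval_eq_sum_range, Finset.sum_apply, Pi.smul_apply, smul_eq_mul, Finset.mul_sum]
    exact Finset.sum_comm
  rw [hsum]
  refine Submodule.sum_mem _ fun k _ => ?_
  obtain rfl | hk := k.eq_zero_or_pos
  · rw [coeff_zero_eq_eval_zero, hP, zero_smul]
    exact Submodule.zero_mem _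
  · exact Submodule.smul_mem _ _ (sum_divisors_pow_mem_macMSpan hk)

lemma sum_divisors_sum_Ico_mem_macMSpan {k : ℕ} (hk : 0 < k) :
    (fun n : ℕ+ => ∑ l ∈ (n : ℕ).divisors,
      ∑ j ∈ Finset.Ico 1 l, (3 * (j : ℂ) ^ (k + 1) - l * (j : ℂ) ^ k)) ∈ macMSpan := by
  obtain ⟨P, hP⟩ := exists_polynomial_eval_eq_sum_range_pow ℂ (k + 1)
  obtain ⟨P', hP'⟩ := exists_polynomial_eval_eq_sum_range_pow ℂ k
  have heval (l : ℕ) : (3 * P - X * P').eval (l : ℂ) =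
      ∑ j ∈ Finset.range l, (3 * (j : ℂ) ^ (k + 1) - l * (j : ℂ) ^ k) := by
    simp only [eval_sub, eval_mul, eval_ofNat, eval_X, hP, hP', Finset.sum_sub_distrib,
      Finset.mul_sum]
  have hzero : (3 * P - X * P').eval 0 = 0 := by simpa using heval 0
  convert sum_divisors_eval_mem_macMSpan hzero using 4 with n l hl
  rw [heval, Finset.range_eq_Ico, Finset.sum_eq_sum_Ico_succ_bot (Nat.pos_of_mem_divisors hl)]
  simp [hk.ne']

lemma add_pow_mul_two_mul_add {R : Type*} [CommSemiring R] (a b : R) (k : ℕ) :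
    (a + b) ^ k * (2 * a + b) =
      2 * a ^ (k + 1) + b ^ (k + 1) + ∑ j ∈ Finset.range k,
        (2 * k.choose j + k.choose (j + 1) : R) * (a ^ (j + 1) * b ^ (k - j)) := by
  have hb : (a + b) ^ k * b = b ^ (k + 1) + ∑ j ∈ Finset.range k,
      (k.choose (j + 1) : R) * (a ^ (j + 1) * b ^ (k - j)) := by
    rw [add_pow, Finset.sum_range_succ', add_mul, Finset.sum_mul, add_comm]
    congr 1
    · simp [pow_succ]
    · refine Finset.sum_congr rfl fun j hj => ?_
      rw [show k - j = k - (j + 1) + 1 by have := Finset.mem_range.1 hj; omega]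
      ring
  have ha : (a + b) ^ k * a = a ^ (k + 1) + ∑ j ∈ Finset.range k,
      (k.choose j : R) * (a ^ (j + 1) * b ^ (k - j)) := by
    rw [add_pow, Finset.sum_range_succ, add_mul, Finset.sum_mul, add_comm]
    congr 1
    · simp [pow_succ]
    · exact Finset.sum_congr rfl fun j _ => by ring
  rw [show (a + b) ^ k * (2 * a + b) = 2 * ((a + b) ^ k * a) + (a + b) ^ k * b by ring, ha, hb]
  simp only [add_mul, Finset.sum_add_distrib, mul_assoc, ← Finset.mul_sum]
  ring

lemma sum_divisors_pow_mul_sub_eq (k n : ℕ) :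
    ∑ d ∈ n.divisors, (d : ℂ) ^ k * (n - d) =
      ∑ l ∈ n.divisors, ∑ j ∈ Finset.Ico 1 l, (3 * (j : ℂ) ^ (k + 1) - l * (j : ℂ) ^ k)
      - ∑ x ∈ twoTermReps n with x.1.2 < x.2.2, (x.1.1 : ℂ) ^ k * (x.2.1 : ℂ) ^ 1
      - ∑ j ∈ Finset.range k, (2 * k.choose j + k.choose (j + 1) : ℂ) *
          ∑ x ∈ twoTermReps n with x.1.2 < x.2.2,
            (x.1.1 : ℂ) ^ (j + 1) * (x.2.1 : ℂ) ^ (k - j) := by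
  -- This `Q` satisfies `Q b b = b ^ (k + 1)` and makes the pure powers of `a` and of `b` cancel
  -- from `Q b (a + b) + Q (a + b) b - Q a b - Q b a`.
  let Q (a b : ℕ) : ℂ := 2 * (a : ℂ) ^ (k + 1) - (a : ℂ) ^ k * b
  have hoff (a b : ℕ) : Q b (a + b) + Q (a + b) b = Q a b + Q b a + ((a : ℂ) ^ k * (b : ℂ) ^ 1 +
      ∑ j ∈ Finset.range k,
        (2 * k.choose j + k.choose (j + 1) : ℂ) * ((a : ℂ) ^ (j + 1) * (b : ℂ) ^ (k - j))) := by
    simp only [Q, Nat.cast_add]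
    linear_combination add_pow_mul_two_mul_add (a : ℂ) b k
  have hdiag_fst : ∑ y ∈ n.divisorsAntidiagonal, (y.1 - 1) • Q y.2 y.2 =
      ∑ d ∈ n.divisors, (d : ℂ) ^ k * (n - d) := by
    rw [← Nat.sum_divisorsAntidiagonal' fun _ d => (d : ℂ) ^ k * (n - d)]
    refine Finset.sum_congr rfl fun y hy => ?_
    obtain ⟨hn, hne⟩ := Nat.mem_divisorsAntidiagonal.1 hy
    have hpos : 1 ≤ y.1 := Nat.one_le_iff_ne_zero.2 fun h => hne (by rw [← hn, h, zero_mul])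
    rw [nsmul_eq_mul, Nat.cast_sub hpos, ← hn]
    push_cast [Q]
    ring
  have hdiag_snd : ∀ l ∈ n.divisors, ∑ j ∈ Finset.Ico 1 l, Q j (l - j) =
      ∑ j ∈ Finset.Ico 1 l, (3 * (j : ℂ) ^ (k + 1) - l * (j : ℂ) ^ k) := fun l _ =>
    Finset.sum_congr rfl fun j hj => by
      simp only [Q, Nat.cast_sub (Finset.mem_Ico.1 hj).2.le]
      ring
  have hexchange := sum_twoTermReps_exchange n Q
  simp only [hoff, Finset.sum_add_distrib, hdiag_fst] at hexchange
  rw [Finset.sum_congr rfl hdiag_snd,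
    Finset.sum_comm (s := Finset.filter _ _)] at hexchange
  simp only [Finset.mul_sum]
  linear_combination hexchange

lemma sum_divisors_pow_mul_sub_mem_macMSpan {k : ℕ} (hk : 0 < k) :
    (fun n : ℕ+ => ∑ d ∈ (n : ℕ).divisors, (d : ℂ) ^ k * (n - d)) ∈ macMSpan := by
  simp only [sum_divisors_pow_mul_sub_eq]
  refine Submodule.sub_mem _ (Submodule.sub_mem _ (sum_divisors_sum_Ico_mem_macMSpan hk)
    (sum_twoTermReps_pow_mul_pow_mem_macMSpan hk one_pos)) ?_
  convert Submodule.sum_mem macMSpan fun j (hj : j ∈ Finset.range k) =>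
    Submodule.smul_mem macMSpan (2 * k.choose j + k.choose (j + 1) : ℂ)
      (sum_twoTermReps_pow_mul_pow_mem_macMSpan j.succ_pos
        (Nat.sub_pos_of_lt (Finset.mem_range.1 hj))) using 1
  funext n
  simp only [Finset.sum_apply, Pi.smul_apply, smul_eq_mul, Nat.succ_eq_add_one]

/-- A prime detector, for `0 < k` a combination of MacMahonesque functions. The subtractions do not
truncate, since `1 ≤ d ≤ n` for every divisor `d` of `n`. -/
def primeDetector (k n : ℕ) : ℕ := ∑ d ∈ n.divisors, d ^ k * (d - 1) * (n - d)

lemma primeDetector_eq_zero_iff (k : ℕ) {n : ℕ} (hn : 2 ≤ n) :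
    primeDetector k n = 0 ↔ n.Prime := by
  rw [primeDetector, Finset.sum_eq_zero_iff, Nat.prime_def]
  simp only [Nat.mem_divisors]
  constructor
  · refine fun h => ⟨hn, fun d hd => ?_⟩
    have hpos := Nat.pos_of_dvd_of_pos hd (by omega)
    have hle := Nat.le_of_dvd (by omega) hd
    have hzero := h d ⟨hd, by omega⟩
    rw [mul_assoc, mul_eq_zero_iff_left (pow_pos hpos k).ne', mul_eq_zero] at hzero
    omega
  · rintro ⟨-, h⟩ d ⟨hd, -⟩
    rcases h d hd with rfl | rfl <;> simp

lemma primeDetector_prime_sq (k : ℕ) {p : ℕ} (hp : p.Prime) :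
    primeDetector k (p ^ 2) = p ^ (k + 1) * (p - 1) ^ 2 := by
  rw [primeDetector, Nat.divisors_prime_pow hp, Finset.sum_map]
  simp only [Finset.sum_range_succ, Finset.sum_range_zero, Function.Embedding.coeFn_mk, pow_zero,
    pow_one, Nat.sub_self, mul_zero, zero_mul, zero_add, add_zero, sq, ← Nat.mul_sub_one]
  ring

lemma primeDetector_mem_macMSpan {k : ℕ} (hk : 0 < k) :
    (fun n : ℕ+ => (primeDetector k n : ℂ)) ∈ macMSpan := by
  convert Submodule.sub_mem _ (sum_divisors_pow_mul_sub_mem_macMSpan k.add_one_pos)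
    (sum_divisors_pow_mul_sub_mem_macMSpan hk) using 1
  funext n
  rw [Pi.sub_apply, ← Finset.sum_sub_distrib, primeDetector, Nat.cast_sum]
  refine Finset.sum_congr rfl fun d hd => ?_
  rw [Nat.cast_mul, Nat.cast_mul, Nat.cast_sub (Nat.divisor_le hd),
    Nat.cast_sub (Nat.pos_of_mem_divisors hd)]
  push_cast
  ring

section Twisted

variable (t : ℕ)

/-- The complex span of the coefficient functions `n ↦ ζ_t^{sn} M_{𝐚}(n)`, `0 ≤ s < t`, of the
twisted generating functions `𝒰_{𝐚}(ζ_t^s q)`. -/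
def twistedMacMSpan : Submodule ℂ (ℕ+ → ℂ) :=
  Submodule.span ℂ ((fun (x : List ℕ+ × ℕ) (n : ℕ+) =>
    exp (2 * Real.pi * I / (t : ℂ)) ^ (x.2 * (n : ℕ)) * (macM x.1 n : ℂ)) '' {x | x.2 < t})

variable {t}

lemma exists_sum_of_mem_twistedMacMSpan {f : ℕ+ → ℂ} (hf : f ∈ twistedMacMSpan t) :
    ∃ (S : Finset (List ℕ+)) (c : List ℕ+ → ℕ → ℂ), ∀ n : ℕ+, f n =
      ∑ v ∈ S, ∑ s ∈ Finset.range t,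
        c v s * exp (2 * Real.pi * I / (t : ℂ)) ^ (s * (n : ℕ)) * (macM v (n : ℕ) : ℂ) := by
  obtain ⟨c, hc, rfl⟩ := (Finsupp.mem_span_image_iff_linearCombination ℂ).1 hf
  refine ⟨c.support.image Prod.fst, fun v s => c (v, s), fun n => ?_⟩
  have hsub : c.support ⊆ c.support.image Prod.fst ×ˢ Finset.range t := fun x hx =>
    Finset.mem_product.2 ⟨Finset.mem_image_of_mem _ hx, Finset.mem_range.2 (hc hx)⟩
  rw [Finsupp.linearCombination_apply, Finsupp.sum_of_support_subset c hsub _ (by simp),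
    Finset.sum_apply, Finset.sum_product]
  simp only [Pi.smul_apply, smul_eq_mul, mul_assoc]

variable [NeZero t]

lemma exists_fourier_expansion (χ : ZMod t → ℂ) : ∃ c : ZMod t → ℂ, ∀ n : ℕ,
    χ n = ∑ s : ZMod t, c s * exp (2 * Real.pi * I / (t : ℂ)) ^ (s.val * n) := by
  refine ⟨fun s => (t : ℂ)⁻¹ * ZMod.dft χ s, fun n => ?_⟩
  have hchar (s : ZMod t) : ZMod.stdAddChar (s * (n : ZMod t)) =
      exp (2 * Real.pi * I / (t : ℂ)) ^ (s.val * n) := by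
    have hcast : s * (n : ZMod t) = ((s.val * n : ℕ) : ℤ) := by simp
    rw [hcast, ZMod.stdAddChar_coe, ← Complex.exp_nat_mul]
    push_cast
    ring_nf
  conv_lhs => rw [← ZMod.dft.symm_apply_apply χ, ZMod.invDFT_apply]
  simp only [hchar, smul_eq_mul, Finset.mul_sum]
  exact Finset.sum_congr rfl fun s _ => by ring

lemma periodic_mul_mem_twistedMacMSpan (χ : ZMod t → ℂ) {f : ℕ+ → ℂ} (hf : f ∈ macMSpan) :
    (fun n : ℕ+ => χ (n : ℕ) * f n) ∈ twistedMacMSpan t := by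
  suffices h : macMSpan ≤ (twistedMacMSpan t).comap
      (LinearMap.mulLeft ℂ fun n : ℕ+ => χ (n : ℕ)) from h hf
  refine Submodule.span_le.2 ?_
  rintro _ ⟨v, rfl⟩
  obtain ⟨c, hc⟩ := exists_fourier_expansion χ
  have hsum : (fun n : ℕ+ => χ (n : ℕ)) * (fun n : ℕ+ => (macM v n : ℂ)) =
      ∑ s : ZMod t, c s • fun n : ℕ+ =>
        exp (2 * Real.pi * I / (t : ℂ)) ^ (s.val * (n : ℕ)) * (macM v n : ℂ) := by
    funext n
    simp only [Pi.mul_apply, hc, Finset.sum_mul, Finset.sum_apply, Pi.smul_apply, smul_eq_mul,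
      mul_assoc]
  change (fun n : ℕ+ => χ (n : ℕ)) * (fun n : ℕ+ => (macM v n : ℂ)) ∈ twistedMacMSpan t
  rw [hsum]
  exact Submodule.sum_mem _ fun s _ => Submodule.smul_mem _ _
    (Submodule.subset_span ⟨(v, s.val), s.val_lt, rfl⟩)

end Twisted

section ResidueClasses

variable {t : ℕ} (A : Set (ZMod t)) [DecidablePred (· ∈ A)]

/-- The prime detector `primeDetector k`, made nonzero outside the residue classes in `A` by adding
the sum of divisors there. -/
def residuePrimeDetector (k n : ℕ) : ℕ :=
  primeDetector k n + if (n : ZMod t) ∈ A then 0 else ∑ d ∈ n.divisors, d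

lemma residuePrimeDetector_eq_zero_iff (k : ℕ) {n : ℕ} (hn : 2 ≤ n) :
    residuePrimeDetector A k n = 0 ↔ n.Prime ∧ (n : ZMod t) ∈ A := by
  have hdiv : ∑ d ∈ n.divisors, d ≠ 0 :=
    (Finset.sum_pos (fun _ => Nat.pos_of_mem_divisors) (Nat.nonempty_divisors.2 (by omega))).ne'
  simp [residuePrimeDetector, primeDetector_eq_zero_iff k hn, hdiv]

lemma residuePrimeDetector_mem_twistedMacMSpan [NeZero t] {k : ℕ} (hk : 0 < k) :
    (fun n : ℕ+ => (residuePrimeDetector A k n : ℂ)) ∈ twistedMacMSpan t := by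
  convert Submodule.add_mem _
    (periodic_mul_mem_twistedMacMSpan (t := t) 1 (primeDetector_mem_macMSpan hk))
    (periodic_mul_mem_twistedMacMSpan (fun a => if a ∈ A then 0 else 1)
      (sum_divisors_pow_mem_macMSpan one_pos)) using 1
  funext n
  simp [residuePrimeDetector]

/-- The value of `residuePrimeDetector A k` at the square of a prime congruent to `1`, as a
polynomial in that prime. -/
noncomputable def residuePrimeDetectorPoly (k : ℕ) : ℂ[X] :=
  X ^ (k + 1) * (X - C 1) ^ 2 + C (if (1 : ZMod t) ∈ A then 0 else 1) * (X ^ 2 + X + 1)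

lemma residuePrimeDetector_prime_sq (k : ℕ) {p : ℕ} (hp : p.Prime) (hpt : p ≡ 1 [MOD t]) :
    (residuePrimeDetector A k (p ^ 2) : ℂ) = (residuePrimeDetectorPoly A k).eval (p : ℂ) := by
  have hone : (p : ZMod t) = 1 := by simpa using (ZMod.natCast_eq_natCast_iff p 1 t).2 hpt
  have hdiv : ∑ d ∈ (p ^ 2).divisors, d = p ^ 2 + p + 1 := by
    rw [Nat.sum_divisors_prime_pow hp]
    simp only [Finset.sum_range_succ, Finset.sum_range_zero]
    ring
  rw [residuePrimeDetector, primeDetector_prime_sq k hp, hdiv, Nat.cast_pow, hone, one_pow]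
  simp only [residuePrimeDetectorPoly, eval_add, eval_mul, eval_pow, eval_sub, eval_X, eval_one,
    eval_C, Nat.cast_add, Nat.cast_mul, Nat.cast_pow, Nat.cast_sub hp.one_le, Nat.cast_one,
    Nat.cast_ite, Nat.cast_zero, ite_mul, zero_mul, one_mul]

lemma natDegree_residuePrimeDetectorPoly (k : ℕ) :
    (residuePrimeDetectorPoly A k).natDegree = k + 3 := by
  have hlead : (X ^ (k + 1) * (X - C 1) ^ 2 : ℂ[X]).natDegree = k + 3 := by
    rw [natDegree_mul (by simp) (pow_ne_zero 2 (X_sub_C_ne_zero 1)), natDegree_X_pow,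
      natDegree_pow, natDegree_X_sub_C]
  have htail : (C (if (1 : ZMod t) ∈ A then (0 : ℂ) else 1) * (X ^ 2 + X + 1)).natDegree ≤ 2 := by
    compute_degree
  rw [residuePrimeDetectorPoly, natDegree_add_eq_left_of_natDegree_lt (by omega), hlead]

lemma linearIndependent_residuePrimeDetector [NeZero t] :
    LinearIndependent ℂ fun (i : ℕ) (n : ℕ+) => (residuePrimeDetector A (i + 1) n : ℂ) := by
  let T := {p : ℕ // p.Prime ∧ p ≡ 1 [MOD t]}
  let sq : T → ℕ+ := fun p => ⟨p ^ 2, pow_pos p.2.1.pos 2⟩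
  have hT : (Set.range fun p : T => (p : ℂ)).Infinite := by
    have : Infinite T := (Nat.infinite_setOfPred_prime_modEq_one (NeZero.ne t)).to_subtype
    exact Set.infinite_range_of_injective (Nat.cast_injective.comp Subtype.val_injective)
  have hpoly : LinearIndependent ℂ fun i : ℕ => residuePrimeDetectorPoly A (i + 1) := by
    have hdeg (i : ℕ) := natDegree_residuePrimeDetectorPoly A (i + 1)
    refine linearIndependent_of_injective_natDegree
      (fun i => ne_zero_of_natDegree_gt (n := 0) (by rw [hdeg]; omega)) fun i j hij => ?_
    simp only [hdeg] at hij
    omega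
  have heval : (fun (i : ℕ) (p : T) => (residuePrimeDetectorPoly A (i + 1)).eval (p : ℂ)) =
      LinearMap.funLeft ℂ ℂ sq ∘ fun i n => (residuePrimeDetector A (i + 1) n : ℂ) := by
    funext i p
    exact (residuePrimeDetector_prime_sq A (i + 1) p.2.1 p.2.2).symm
  refine LinearIndependent.of_comp (LinearMap.funLeft ℂ ℂ sq) ?_
  rw [← heval]
  exact linearIndependent_eval_of_infinite_range hpoly hT

end ResidueClasses

theorem infinitely_many_prime_ap_detectors_general (t : ℕ) [NeZero t] (A : Set (ZMod t)) :
    ∃ f : ℕ → (ℕ+ → ℂ),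
      LinearIndependent ℂ f ∧
      ∀ i : ℕ, ∃ d : ℕ, 7 ≤ d ∧
        ∃ (S : Finset (List ℕ+)) (c : List ℕ+ → ℕ → ℂ),
          (∀ v ∈ S, weight v ≤ d) ∧
          (∀ n : ℕ+, f i n =
            ∑ v ∈ S, ∑ s ∈ Finset.range t,
              c v s * Complex.exp (2 * Real.pi * I / (t : ℂ)) ^ (s * (n : ℕ)) *
                (macM v (n : ℕ) : ℂ)) ∧
          (∀ n : ℕ+, ∃ x : ℝ, 0 ≤ x ∧ f i n = (x : ℂ)) ∧
          (∀ n : ℕ+, 2 ≤ (n : ℕ) →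
            (f i n = 0 ↔ (n : ℕ).Prime ∧ ((n : ℕ) : ZMod t) ∈ A)) := by
  classical
  refine ⟨fun i n => residuePrimeDetector A (i + 1) n, linearIndependent_residuePrimeDetector A,
    fun i => ?_⟩
  obtain ⟨S, c, hsum⟩ :=
    exists_sum_of_mem_twistedMacMSpan (residuePrimeDetector_mem_twistedMacMSpan A i.succ_pos)
  refine ⟨max 7 (S.sup weight), le_max_left _ _, S, c,
    fun v hv => le_max_of_le_right (Finset.le_sup hv), hsum,
    fun n => ⟨residuePrimeDetector A (i + 1) n, Nat.cast_nonneg _, by push_cast; rfl⟩,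
    fun n hn => ?_⟩
  rw [Nat.cast_eq_zero, residuePrimeDetector_eq_zero_iff A (i + 1) hn]

/-- There are infinitely many linearly independent combinations of twisted
MacMahonesque functions, of weight at most some `d ≥ 7`, strongly detecting the
primes congruent to `r` modulo `t`. -/
theorem infinitely_many_prime_ap_detectors (t r : ℕ) (ht : 2 ≤ t) (hr : 0 < r)
    (hrt : r < t) (hgcd : Nat.gcd r t = 1) :
    ∃ f : ℕ → (ℕ+ → ℂ),
      LinearIndependent ℂ f ∧
      ∀ i : ℕ, ∃ d : ℕ, 7 ≤ d ∧
        ∃ (S : Finset (List ℕ+)) (c : List ℕ+ → ℕ → ℂ),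
          (∀ v ∈ S, weight v ≤ d) ∧
          (∀ n : ℕ+, f i n =
            ∑ v ∈ S, ∑ s ∈ Finset.range t,
              c v s * Complex.exp (2 * Real.pi * I / (t : ℂ)) ^ (s * (n : ℕ)) *
                (macM v (n : ℕ) : ℂ)) ∧
          (∀ n : ℕ+, ∃ x : ℝ, 0 ≤ x ∧ f i n = (x : ℂ)) ∧
          (∀ n : ℕ+, 2 ≤ (n : ℕ) →
            (f i n = 0 ↔ (n : ℕ).Prime ∧ (n : ℕ) % t = r % t)) := by
  have : NeZero t := ⟨by omega⟩
  simpa only [Set.mem_singleton_iff, ZMod.natCast_eq_natCast_iff'] using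
    infinitely_many_prime_ap_detectors_general t {(r : ZMod t)}
end
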